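/- Let 𝒯 be a finite set of rhombus shapes and let X be a subshift of edge-to-edge 𝒯-tilings defined by a computable enumeration ℱ = (f_n) of forbidden patterns. Then the decision problem Domino(X) — given a finite 𝒯-tileset 𝐓, decide whether there exists a valid 𝐓-tiling x of ℝ² with π(x) ∈ X — is co-computably enumerable (Π⁰₁): there is a total computable function g : dom × ℕ → {0,1} such that Domino(X)(𝐓) holds if and only if g(𝐓,n) = 1 for every n ∈ ℕ. -/

import Mathlib

open Set Metric

noncomputable section

/-- Points of the euclidean plane. -/
abbrev Pt : Type := EuclideanSpace ℝ (Fin 2)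

/-- A rhombus tile in the plane, given by a position (a distinguished vertex)
and its two edge vectors. -/
structure Rhombus where
  pos : Pt
  u : Pt
  v : Pt

namespace Rhombus

/-- A genuine rhombus: linearly independent edge vectors of equal euclidean length. -/
def IsValid (r : Rhombus) : Prop :=
  LinearIndependent ℝ ![r.u, r.v] ∧ ‖r.u‖ = ‖r.v‖

/-- The support of a rhombus: the closed parallelogram it spans. -/
def support (r : Rhombus) : Set Pt :=
  {x | ∃ s t : ℝ, s ∈ Icc (0 : ℝ) 1 ∧ t ∈ Icc (0 : ℝ) 1 ∧ x = r.pos + s • r.u + t • r.v}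

/-- The four vertices of a rhombus. -/
def vertices (r : Rhombus) : Set Pt :=
  {r.pos, r.pos + r.u, r.pos + r.v, r.pos + r.u + r.v}

/-- The four (closed) edges of a rhombus, indexed as in the paper:
edge `0` from `pos` to `pos + u`, edge `1` from `pos + u` to `pos + u + v`,
edge `2` from `pos + u + v` to `pos + v`, edge `3` from `pos + v` to `pos`. -/
def edge (r : Rhombus) : Fin 4 → Set Pt :=
  ![segment ℝ r.pos (r.pos + r.u),
    segment ℝ (r.pos + r.u) (r.pos + r.u + r.v),
    segment ℝ (r.pos + r.u + r.v) (r.pos + r.v),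
    segment ℝ (r.pos + r.v) r.pos]

/-- The set of edges of a rhombus. -/
def edges (r : Rhombus) : Set (Set Pt) := Set.range r.edge

/-- Translation of a rhombus by a vector. -/
def translate (r : Rhombus) (w : Pt) : Rhombus := ⟨r.pos + w, r.u, r.v⟩

/-- The center of a rhombus. -/
def center (r : Rhombus) : Pt := r.pos + (2⁻¹ : ℝ) • r.u + (2⁻¹ : ℝ) • r.v

/-- Two rhombi are translates of each other (same shape up to translation). -/
def SameShape (r s : Rhombus) : Prop := r.u = s.u ∧ r.v = s.v

/-- `w` is one of the two edge directions of `r` (up to sign). -/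
def HasEdgeDir (r : Rhombus) (w : Pt) : Prop :=
  r.u = w ∨ r.u = -w ∨ r.v = w ∨ r.v = -w

end Rhombus

/-- Two rhombi are in edge-to-edge position: they are disjoint, share exactly one
common vertex, or share exactly one full common edge. -/
def EdgeToEdgePair (r s : Rhombus) : Prop :=
  r.support ∩ s.support = ∅ ∨
  (∃ p, p ∈ r.vertices ∧ p ∈ s.vertices ∧ r.support ∩ s.support = {p}) ∨
  (∃ e, e ∈ r.edges ∧ e ∈ s.edges ∧ r.support ∩ s.support = e)

/-- An edge-to-edge rhombus tiling of the plane: a covering of the plane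
without overlap where any two tiles are disjoint, share exactly one vertex or
share a full common edge. -/
def IsTiling (x : Set Rhombus) : Prop :=
  (∀ r ∈ x, r.IsValid) ∧
  (⋃ r ∈ x, r.support) = univ ∧
  ∀ r ∈ x, ∀ s ∈ x, r ≠ s → EdgeToEdgePair r s

/-- Every tile of `x` is a translate of a shape of the shapeset `T`. -/
def UsesShapes (T : Set Rhombus) (x : Set Rhombus) : Prop :=
  ∀ r ∈ x, ∃ s ∈ T, r.SameShape s

/-- An edge-to-edge tiling whose tiles are translates of shapes of `T`. -/
def IsTilingOn (T : Set Rhombus) (x : Set Rhombus) : Prop :=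
  IsTiling x ∧ UsesShapes T x

/-- Support of a patch. -/
def PatchSupport (P : Set Rhombus) : Set Pt := ⋃ r ∈ P, r.support

/-- A patch: a finite nonempty edge-to-edge set of rhombi whose support is
simply connected (no holes). -/
def IsPatch (P : Set Rhombus) : Prop :=
  P.Finite ∧ P.Nonempty ∧ (∀ r ∈ P, r.IsValid) ∧
  (∀ r ∈ P, ∀ s ∈ P, r ≠ s → EdgeToEdgePair r s) ∧
  SimplyConnectedSpace (PatchSupport P)

/-- Translation of a set of rhombi. -/
def translatePatch (P : Set Rhombus) (w : Pt) : Set Rhombus :=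
  (fun r => r.translate w) '' P

/-- The pattern `f` appears in `x`: some translate of `f` is a sub-collection of `x`. -/
def Appears (f : Set Rhombus) (x : Set Rhombus) : Prop :=
  ∃ w : Pt, translatePatch f w ⊆ x

/-- Vertices of a patch. -/
def PatchVertices (P : Set Rhombus) : Set Pt := ⋃ r ∈ P, r.vertices

/-- The support of `P` contains a disk of radius `ρ` centered at a vertex of `P`. -/
def HasRadius (P : Set Rhombus) (ρ : ℝ) : Prop :=
  ∃ c ∈ PatchVertices P, closedBall c ρ ⊆ PatchSupport P

/-- `P` has minimal radius `ρ`: its support contains a disk of radius `ρ` centered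
at one of its vertices, and removing any tile breaks this property. -/
def MinimalRadius (P : Set Rhombus) (ρ : ℝ) : Prop :=
  HasRadius P ρ ∧ ∀ r ∈ P, ¬ HasRadius (P \ {r}) ρ

/-- A rhombus Wang tile: a rhombus with a colour (a natural number) on each edge. -/
structure ColoredRhombus where
  shape : Rhombus
  color : Fin 4 → ℕ

namespace ColoredRhombus

def translate (t : ColoredRhombus) (w : Pt) : ColoredRhombus :=
  ⟨t.shape.translate w, t.color⟩

/-- Two coloured tiles are equal up to translation. -/
def SameTile (t s : ColoredRhombus) : Prop :=
  t.shape.SameShape s.shape ∧ t.color = s.color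

end ColoredRhombus

/-- The colour-erasing operator `π`. -/
def eraseColors (x : Set ColoredRhombus) : Set Rhombus := ColoredRhombus.shape '' x

def translateColoredPatch (P : Set ColoredRhombus) (w : Pt) : Set ColoredRhombus :=
  (fun t => t.translate w) '' P

/-- Any two tiles sharing an edge carry the same colour on the shared edge. -/
def ColorMatching (x : Set ColoredRhombus) : Prop :=
  ∀ t ∈ x, ∀ s ∈ x, t.shape ≠ s.shape →
    ∀ i j : Fin 4, t.shape.edge i = s.shape.edge j → t.color i = s.color j

/-- No two distinct coloured tiles occupy the same rhombus. -/
def ShapeInjective (x : Set ColoredRhombus) : Prop :=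
  ∀ t ∈ x, ∀ s ∈ x, t.shape = s.shape → t = s

/-- A valid tiling by rhombus Wang tiles. -/
def IsColoredTiling (x : Set ColoredRhombus) : Prop :=
  IsTiling (eraseColors x) ∧ ShapeInjective x ∧ ColorMatching x

/-- A valid patch of rhombus Wang tiles. -/
def IsColoredPatch (x : Set ColoredRhombus) : Prop :=
  IsPatch (eraseColors x) ∧ ShapeInjective x ∧ ColorMatching x

/-- All tiles of `x` are translates of tiles of the tileset `T`. -/
def TilesFrom (T : Set ColoredRhombus) (x : Set ColoredRhombus) : Prop :=
  ∀ t ∈ x, ∃ s ∈ T, t.SameTile s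

/-- A subshift on the shapeset `T`: a set of `T`-tilings that is invariant under
translation and closed for the tiling topology (a tiling all of whose finite
patterns appear in tilings of `X` belongs to `X`). -/
def IsSubshift (T : Set Rhombus) (X : Set (Set Rhombus)) : Prop :=
  (∀ x ∈ X, IsTilingOn T x) ∧
  (∀ x ∈ X, ∀ w : Pt, translatePatch x w ∈ X) ∧
  (∀ x, IsTilingOn T x →
    (∀ P, P ⊆ x → P.Finite → P.Nonempty → ∃ y ∈ X, Appears P y) → x ∈ X)

/-- The shape `r` is uniformly recurrent in the tiling `x`: for some `R > 0`,
every disk of radius `R` contains an occurrence (a translate) of `r`. -/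
def UniformlyRecurrentIn (r : Rhombus) (x : Set Rhombus) : Prop :=
  ∃ R : ℝ, 0 < R ∧ ∀ p : Pt, ∃ s ∈ x, s.SameShape r ∧ s.support ⊆ closedBall p R

/-- A shape uniformly recurrent subshift: every shape appearing somewhere in `X`
is uniformly recurrent in every tiling of `X`. -/
def ShapeUniformlyRecurrent (X : Set (Set Rhombus)) : Prop :=
  ∀ r : Rhombus, (∃ y ∈ X, ∃ s ∈ y, s.SameShape r) →
    ∀ x ∈ X, UniformlyRecurrentIn r x

/-- The restriction of `X` to the tilings using only shapes of `T'`. -/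
def restrictShapes (T' : Set Rhombus) (X : Set (Set Rhombus)) : Set (Set Rhombus) :=
  {x ∈ X | UsesShapes T' x}

/-- The subshift on `T` defined by the sequence `F` of forbidden patterns. -/
def SubshiftOfForbidden (T : Set Rhombus) (F : ℕ → Set Rhombus) : Set (Set Rhombus) :=
  {x | IsTilingOn T x ∧ ∀ n : ℕ, ¬ Appears (F n) x}

/-- A chain of rhombuses of normal vector `w` in the tiling `x`: a bi-infinite
sequence of tiles in which any two consecutive tiles share a full common edge of
direction `w`, the chain crossing each of its tiles from one of its two
`w`-edges to the other one. -/
structure Chain (x : Set Rhombus) (w : Pt) where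
  seq : ℤ → Rhombus
  mem : ∀ n : ℤ, seq n ∈ x
  shares : ∀ n : ℤ, ∃ a : Pt,
    segment ℝ a (a + w) ∈ (seq n).edges ∧
    segment ℝ a (a + w) ∈ (seq (n + 1)).edges ∧
    (seq n).support ∩ (seq (n + 1)).support = segment ℝ a (a + w)
  progress : ∀ n : ℤ,
    (seq (n - 1)).support ∩ (seq n).support ≠ (seq n).support ∩ (seq (n + 1)).support

/-- The set of tiles of a chain. -/
def Chain.tiles {x : Set Rhombus} {w : Pt} (c : Chain x w) : Set Rhombus :=
  Set.range c.seq

/-- A symbolic Wang tile on the shapeset indexed by `Fin k`: a shape index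
together with the four edge colours `(a₀, a₁, a₂, a₃)`. -/
abbrev SymbTile (k : ℕ) : Type := Fin k × ℕ × ℕ × ℕ × ℕ

/-- The colours of a symbolic tile, as a function on edge indices. -/
def SymbTile.colors {k : ℕ} (t : SymbTile k) : Fin 4 → ℕ :=
  ![t.2.1, t.2.2.1, t.2.2.2.1, t.2.2.2.2]

/-- The geometric coloured tile `t` is a translate of the symbolic tile `p`. -/
def Realizes {k : ℕ} (shapes : Fin k → Rhombus) (t : ColoredRhombus) (p : SymbTile k) :
    Prop :=
  t.shape.SameShape (shapes p.1) ∧ t.color = SymbTile.colors p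

/-- The Domino problem on the subshift `X`: given a tileset `T`, decide whether
there is a valid tiling by translates of tiles of `T` whose colour-erased image
belongs to `X`. -/
def DominoPred {k : ℕ} (shapes : Fin k → Rhombus) (X : Set (Set Rhombus))
    (T : List (SymbTile k)) : Prop :=
  ∃ x : Set ColoredRhombus, IsColoredTiling x ∧
    (∀ t ∈ x, ∃ p ∈ T, Realizes shapes t p) ∧ eraseColors x ∈ X

/-- A displacement code: a formal integer combination of edge vectors of the shapes. -/
abbrev Disp (k : ℕ) : Type := List (Fin k × ℤ × ℤ)

/-- The vector coded by a displacement code. -/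
def dispVec {k : ℕ} (shapes : Fin k → Rhombus) (d : Disp k) : Pt :=
  (d.map (fun e => (e.2.1 : ℝ) • (shapes e.1).u + (e.2.2 : ℝ) • (shapes e.1).v)).sum

/-- A code for a pattern of (uncoloured) shapes: each entry is a shape index and
the displacement of the corresponding tile. -/
abbrev PatternCode (k : ℕ) : Type := List (Fin k × Disp k)

/-- The pattern coded by a pattern code. -/
def decodePattern {k : ℕ} (shapes : Fin k → Rhombus) (c : PatternCode k) : Set Rhombus :=
  {r | ∃ e ∈ c, r = (shapes e.1).translate (dispVec shapes e.2)}

/-- A code for a pattern of coloured tiles. -/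
abbrev ColoredCode (k : ℕ) : Type := List (SymbTile k × Disp k)

/-- The coloured pattern coded by a coloured pattern code. -/
def decodeColored {k : ℕ} (shapes : Fin k → Rhombus) (c : ColoredCode k) :
    Set ColoredRhombus :=
  {t | ∃ e ∈ c,
    t = ColoredRhombus.mk ((shapes e.1.1).translate (dispVec shapes e.2))
          (SymbTile.colors e.1)}

/-- A decision problem is `Π⁰₁` (co-computably enumerable): there is a total
computable `f` such that `A x ↔ ∀ n, f x n = true`. -/
def Pi01 {α : Type} [Primcodable α] (A : α → Prop) : Prop :=
  ∃ f : α → ℕ → Bool, Computable₂ f ∧ ∀ a, A a ↔ ∀ n : ℕ, f a n = true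

/-- A decision problem is `Π⁰₁`-hard: every `Π⁰₁` problem many-one reduces to it. -/
def Pi01Hard {α : Type} [Primcodable α] (A : α → Prop) : Prop :=
  ∀ (β : Type) [Primcodable β], ∀ B : β → Prop, Pi01 B → ManyOneReducible B A

/-!
The edge vectors and positions of the shapes generate a free abelian group `ℤ^m`, so a set of
Wang tiles placed at points of this group is a valuation of countably many Boolean variables. The
requirements that a coloured tiling imposes on the neighbours of each of its tiles, and the absence
of forbidden patterns, are clauses in these variables that can be enumerated from the tileset. By
compactness they are satisfiable iff every finite part of them is, which is a `Π⁰₁` condition.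

A satisfying valuation need not be a tiling, because `ℤ^m` need not be discrete in the plane and
tiles far apart in `ℤ^m` may overlap. But the tiles around each tile of the valuation do form a
local tiling, and such local data can be developed into a tiling of the plane: a choice of tiles
over a ball extends to a slightly larger one, since a ball can be contracted onto a smaller one.
-/

open Encodable Filter Topology Rhombus

/-! ### Primitive recursive functions on the integers -/

theorem primrec_int_toSum : Primrec (fun z : ℤ => Equiv.intEquivNatSumNat z) := by
  rw [← Primrec.encode_iff]
  refine (Primrec.encode (α := ℤ)).of_eq fun z => ?_
  rcases z with n | n <;> rfl

theorem primrec_int_ofNat : Primrec Int.ofNat := by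
  rw [← Primrec.encode_iff]
  exact Primrec.nat_double.of_eq fun _ => rfl

theorem primrec_int_negSucc : Primrec Int.negSucc := by
  rw [← Primrec.encode_iff]
  exact Primrec.nat_double_succ.of_eq fun _ => rfl

theorem primrec_int_toNat : Primrec Int.toNat :=
  (Primrec.sumCasesOn primrec_int_toSum Primrec.snd.to₂ (Primrec.const 0).to₂).of_eq fun z => by
    rcases z with n | n <;> rfl

theorem primrec_int_neg_toNat : Primrec (fun z : ℤ => (-z).toNat) :=
  (Primrec.sumCasesOn primrec_int_toSum (Primrec.const 0).to₂
    (Primrec.succ.comp Primrec.snd).to₂).of_eq fun z => by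
      rcases z with n | n
      · exact (Int.toNat_neg_natCast n).symm
      · rfl

theorem primrec_int_natCast_sub : Primrec₂ (fun a b : ℕ => (a - b : ℤ)) := by
  have h : Primrec (fun p : ℕ × ℕ => if p.2 ≤ p.1 then Int.ofNat (p.1 - p.2)
      else Int.negSucc (p.2 - p.1 - 1)) :=
    Primrec.ite (Primrec.nat_le.comp Primrec.snd Primrec.fst)
      (primrec_int_ofNat.comp (Primrec.nat_sub.comp Primrec.fst Primrec.snd))
      (primrec_int_negSucc.comp (Primrec.nat_sub.comp
        (Primrec.nat_sub.comp Primrec.snd Primrec.fst) (Primrec.const 1)))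
  refine h.to₂.of_eq fun a b => ?_
  dsimp only
  split_ifs <;> grind

theorem primrec_int_sub : Primrec₂ (fun a b : ℤ => a - b) := by
  have h : Primrec (fun p : ℤ × ℤ => ((p.1.toNat + (-p.2).toNat : ℕ) : ℤ) -
      (((-p.1).toNat + p.2.toNat : ℕ) : ℤ)) :=
    primrec_int_natCast_sub.comp
      (Primrec.nat_add.comp (primrec_int_toNat.comp Primrec.fst)
        (primrec_int_neg_toNat.comp Primrec.snd))
      (Primrec.nat_add.comp (primrec_int_neg_toNat.comp Primrec.fst)
        (primrec_int_toNat.comp Primrec.snd))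
  exact h.to₂.of_eq fun a b => by dsimp only; omega

theorem primrec_int_add : Primrec₂ (fun a b : ℤ => a + b) :=
  (primrec_int_sub.comp Primrec.fst
    (primrec_int_sub.comp (Primrec.const 0) Primrec.snd)).to₂.of_eq fun a b => by
      dsimp only; omega

theorem primrec_int_mul : Primrec₂ (fun a b : ℤ => a * b) := by
  have p₁ := primrec_int_toNat.comp (Primrec.fst (α := ℤ) (β := ℤ))
  have p₂ := primrec_int_toNat.comp (Primrec.snd (α := ℤ) (β := ℤ))
  have n₁ := primrec_int_neg_toNat.comp (Primrec.fst (α := ℤ) (β := ℤ))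
  have n₂ := primrec_int_neg_toNat.comp (Primrec.snd (α := ℤ) (β := ℤ))
  have h : Primrec (fun p : ℤ × ℤ =>
      ((p.1.toNat * p.2.toNat + (-p.1).toNat * (-p.2).toNat : ℕ) : ℤ) -
      ((p.1.toNat * (-p.2).toNat + (-p.1).toNat * p.2.toNat : ℕ) : ℤ)) :=
    primrec_int_natCast_sub.comp
      (Primrec.nat_add.comp (Primrec.nat_mul.comp p₁ p₂) (Primrec.nat_mul.comp n₁ n₂))
      (Primrec.nat_add.comp (Primrec.nat_mul.comp p₁ n₂) (Primrec.nat_mul.comp n₁ p₂))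
  refine h.to₂.of_eq fun a b => ?_
  have ha := Int.toNat_sub_toNat_neg a
  have hb := Int.toNat_sub_toNat_neg b
  dsimp only
  push_cast
  grind

/-- Points of the lattice `ℤ^m`, used as coordinates of tile positions. -/
abbrev Posn (m : ℕ) : Type := Fin m → ℤ

namespace Posn

variable {m : ℕ}

theorem primrec₂_of_apply {α β : Type} [Primcodable α] [Primcodable β] {f : α → β → Posn m}
    (h : Primrec₂ fun (p : α × β) l => f p.1 p.2 l) : Primrec₂ f :=
  Primrec.fin_curry.2 h

theorem primrec_apply : Primrec₂ (fun (a : Posn m) l => a l) :=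
  Primrec.fin_app

theorem primrec_add : Primrec₂ (fun a b : Posn m => a + b) :=
  primrec₂_of_apply <| primrec_int_add.comp
    (primrec_apply.comp (Primrec.fst.comp Primrec.fst) Primrec.snd)
    (primrec_apply.comp (Primrec.snd.comp Primrec.fst) Primrec.snd)

theorem primrec_sub : Primrec₂ (fun a b : Posn m => a - b) :=
  primrec₂_of_apply <| primrec_int_sub.comp
    (primrec_apply.comp (Primrec.fst.comp Primrec.fst) Primrec.snd)
    (primrec_apply.comp (Primrec.snd.comp Primrec.fst) Primrec.snd)

theorem primrec_zsmul : Primrec₂ (fun (z : ℤ) (a : Posn m) => z • a) :=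
  primrec₂_of_apply <| primrec_int_mul.comp (Primrec.fst.comp Primrec.fst)
    (primrec_apply.comp (Primrec.snd.comp Primrec.fst) Primrec.snd)

end Posn

theorem primrecPred_mem_of_finite {α : Type} [Primcodable α] {s : Set α} (hs : s.Finite) :
    PrimrecPred (· ∈ s) := by
  induction s, hs using Set.Finite.induction_on with
  | empty => exact (Primrec.const false).primrecPred.of_eq (p := fun _ => false = true) (by simp)
  | @insert b t _ _ ih =>
    exact ((Primrec.eq.comp Primrec.id (Primrec.const b)).or ih).of_eq fun _ => by simp

theorem primrec_nat_pow : Primrec₂ (fun a b : ℕ => a ^ b) :=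
  Primrec₂.unpaired'.1 Nat.Primrec.pow

theorem primrecRel_nat_testBit : PrimrecRel (fun s i : ℕ => s.testBit i = true) := by
  have h : PrimrecRel (fun s i : ℕ => s / 2 ^ i % 2 = 1) :=
    Primrec.eq.comp (Primrec.nat_mod.comp (Primrec.nat_div.comp Primrec.fst
      (primrec_nat_pow.comp (Primrec.const 2) Primrec.snd)) (Primrec.const 2)) (Primrec.const 1)
  exact h.of_eq fun p => by simp [Nat.testBit_eq_decide_div_mod_eq]

/-! ### Effective compactness -/

/-- A clause over the Boolean variables `V`: the pair `(N, P)` stands for the implication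
`⋀ N → ⋁ P`. Valuations are represented by their set of true variables. -/
abbrev Clause (V : Type) : Type := List V × List V

/-- The valuation of `V` read off the binary digits of `s`. -/
def bitValuation (V : Type) [Encodable V] (s : ℕ) : Set V := {i | s.testBit (encode i) = true}

namespace Clause

variable {V : Type}

/-- Truth of a clause under a valuation. -/
def SatisfiedBy (c : Clause V) (v : Set V) : Prop :=
  (∀ i ∈ c.1, i ∈ v) → ∃ i ∈ c.2, i ∈ v

/-- All variables of the clause have code less than `n`, so that a valuation of the clause is
coded by a number with `n` binary digits. -/
def IsBounded [Encodable V] (c : Clause V) (n : ℕ) : Prop :=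
  (∀ i ∈ c.1, encode i < n) ∧ ∀ i ∈ c.2, encode i < n

theorem SatisfiedBy.congr {c : Clause V} {v w : Set V} (h : c.SatisfiedBy v)
    (h₁ : ∀ i ∈ c.1, i ∈ v ↔ i ∈ w) (h₂ : ∀ i ∈ c.2, i ∈ v ↔ i ∈ w) : c.SatisfiedBy w := by
  intro hN
  obtain ⟨i, hi, hiv⟩ := h fun i hi => (h₁ i hi).2 (hN i hi)
  exact ⟨i, hi, (h₂ i hi).1 hiv⟩

theorem satisfiedBy_of_eventually {κ : Type*} {U : Ultrafilter κ} {v : κ → Set V} {c : Clause V}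
    (h : ∀ᶠ n in (U : Filter κ), c.SatisfiedBy (v n)) :
    c.SatisfiedBy {i | ∀ᶠ n in (U : Filter κ), i ∈ v n} := by
  intro hN
  have hN' : ∀ᶠ n in (U : Filter κ), ∀ i ∈ c.1, i ∈ v n :=
    (eventually_all_finite (List.finite_toSet c.1)).2 hN
  exact (Ultrafilter.eventually_exists_mem_iff (List.finite_toSet c.2)).1 <|
    (h.and hN').mono fun _ hn => hn.1 hn.2

theorem eventually_isBounded [Encodable V] (c : Clause V) : ∀ᶠ n in atTop, c.IsBounded n :=
  ((eventually_all_finite (List.finite_toSet c.1)).2 fun _ _ => eventually_gt_atTop _).and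
    ((eventually_all_finite (List.finite_toSet c.2)).2 fun _ _ => eventually_gt_atTop _)

variable [Primcodable V]

theorem primrecRel_isBounded : PrimrecRel (IsBounded (V := V)) := by
  have h : PrimrecRel fun (i : V) (n : ℕ) => encode i < n :=
    Primrec.nat_lt.comp (Primrec.encode.comp Primrec.fst) Primrec.snd
  exact (h.forall_mem_list.comp (Primrec.fst.comp Primrec.fst) Primrec.snd).and
    (h.forall_mem_list.comp (Primrec.snd.comp Primrec.fst) Primrec.snd)

theorem primrecRel_satisfiedBy_bitValuation :
    PrimrecRel fun (c : Clause V) s => c.SatisfiedBy (bitValuation V s) := by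
  have h : PrimrecRel fun (i : V) (s : ℕ) => i ∈ bitValuation V s :=
    primrecRel_nat_testBit.comp Primrec.snd (Primrec.encode.comp Primrec.fst)
  refine PrimrecPred.of_eq (.or (.not <| h.forall_mem_list.comp
    (Primrec.fst.comp Primrec.fst) Primrec.snd) (h.exists_mem_list.comp
    (Primrec.snd.comp Primrec.fst) Primrec.snd)) fun p => ?_
  exact imp_iff_not_or.symm

end Clause

section

variable {V : Type}

/-- Some valuation with `n` digits satisfies every clause of the list whose variables are
bounded by `n`. -/
def IsSatisfiableBelow [Encodable V] (L : List (Clause V)) (n : ℕ) : Prop :=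
  ∃ s < 2 ^ n, ∀ c ∈ L, c.IsBounded n → c.SatisfiedBy (bitValuation V s)

theorem primrecRel_isSatisfiableBelow [Primcodable V] :
    PrimrecRel (IsSatisfiableBelow (V := V)) := by
  have h₁ : PrimrecRel fun (c : Clause V) (p : ℕ × ℕ) =>
      c.IsBounded p.1 → c.SatisfiedBy (bitValuation V p.2) :=
    (PrimrecPred.or (.not <| Clause.primrecRel_isBounded.comp Primrec.fst
      (Primrec.fst.comp Primrec.snd)) (Clause.primrecRel_satisfiedBy_bitValuation.comp Primrec.fst
      (Primrec.snd.comp Primrec.snd))).of_eq fun _ => imp_iff_not_or.symm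
  have h₂ : PrimrecRel fun (s : ℕ) (q : List (Clause V) × ℕ) =>
      ∀ c ∈ q.1, c.IsBounded q.2 → c.SatisfiedBy (bitValuation V s) :=
    h₁.forall_mem_list.comp (Primrec.fst.comp Primrec.snd)
      (Primrec.pair (Primrec.snd.comp Primrec.snd) Primrec.fst)
  exact (PrimrecRel.comp (g := fun q => q) h₂.exists_mem_list (Primrec.list_range.comp
    (primrec_nat_pow.comp (Primrec.const 2) Primrec.snd)) Primrec.id).of_eq
      fun _ => by simp [IsSatisfiableBelow]

theorem isSatisfiableBelow_of_satisfiedBy [Encodable V] {L : List (Clause V)} {v : Set V}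
    (h : ∀ c ∈ L, c.SatisfiedBy v) (n : ℕ) : IsSatisfiableBelow L n := by
  classical
  let bits : Fin n → Bool := fun l => decide ((l : ℕ) ∈ encode '' v)
  have hbits : ∀ i : V, encode i < n → (i ∈ v ↔ i ∈ bitValuation V (Nat.ofBits bits)) := by
    intro i hi
    simp [bitValuation, Nat.testBit_ofBits_lt _ _ hi, bits]
  exact ⟨_, Nat.ofBits_lt_two_pow bits, fun c hc hn =>
    (h c hc).congr (fun i hi => hbits i (hn.1 i hi)) fun i hi => hbits i (hn.2 i hi)⟩

theorem computable₂_list_range_flatMap {α β : Type} [Primcodable α] [Primcodable β]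
    {f : α → ℕ → List β} (hf : Computable₂ f) :
    Computable₂ fun a n => (List.range n).flatMap (f a) := by
  have h : Computable₂ fun (a : α) (n : ℕ) =>
      (Nat.rec [] (fun m l => l ++ f a m) n : List β) :=
    Computable.nat_rec (f := fun p : α × ℕ => p.2) (g := fun _ => [])
      (h := fun p q => q.2 ++ f p.1 q.1) Computable.snd (Computable.const []) <|
      Primrec.list_append.to_comp.comp (Computable.snd.comp Computable.snd)
        (hf.comp (Computable.fst.comp Computable.fst) (Computable.fst.comp Computable.snd))
  refine h.of_eq fun p => ?_
  obtain ⟨a, n⟩ := p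
  dsimp only
  induction n with
  | zero => rfl
  | succ n ih => rw [List.range_succ, List.flatMap_append, ← ih]; simp

/-- A family of sets of valuations cut out by clauses that can be enumerated computably from
the parameter. -/
def IsClausal {α : Type} [Primcodable α] [Primcodable V] (P : α → Set V → Prop) : Prop :=
  ∃ cl : α → ℕ → List (Clause V), Computable₂ cl ∧
    ∀ a v, P a v ↔ ∀ n, ∀ c ∈ cl a n, c.SatisfiedBy v

namespace IsClausal

variable {α J : Type} [Primcodable α] [Primcodable J] [Primcodable V] {P Q : α → Set V → Prop}

theorem congr (hP : IsClausal P) (h : ∀ a v, Q a v ↔ P a v) : IsClausal Q :=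
  (show P = Q from funext₂ fun a v => propext (h a v).symm) ▸ hP

theorem and (hP : IsClausal P) (hQ : IsClausal Q) : IsClausal fun a v => P a v ∧ Q a v := by
  obtain ⟨cl, hcl, h⟩ := hP
  obtain ⟨cl', hcl', h'⟩ := hQ
  refine ⟨fun a n => cl a n ++ cl' a n, Primrec.list_append.to_comp.comp hcl hcl', fun a v => ?_⟩
  simp only [h, h', List.forall_mem_append, forall_and]

theorem ball_of_finite {β : Type*} {s : Set β} (hs : s.Finite) {P : β → α → Set V → Prop}
    (hP : ∀ b ∈ s, IsClausal (P b)) : IsClausal fun a v => ∀ b ∈ s, P b a v := by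
  induction s, hs using Set.Finite.induction_on with
  | empty => exact ⟨fun _ _ => [], Computable.const [], by simp⟩
  | @insert b s _ _ ih =>
    exact ((hP b (mem_insert b s)).and (ih fun b' hb' => hP b' (mem_insert_of_mem b hb'))).congr
      fun a v => forall_mem_insert ..

theorem of_imp {R : J → Prop} (hR : ComputablePred R) {c : α → J → Clause V}
    (hc : Computable₂ c) : IsClausal fun a v => ∀ j, R j → (c a j).SatisfiedBy v := by
  obtain ⟨_, hR⟩ := hR
  refine ⟨fun a n => Option.casesOn (decode (α := J) n) [] fun j =>
    cond (decide (R j)) [c a j] [], ?_, fun a v => ⟨fun h n d hd => ?_, fun h j hj => ?_⟩⟩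
  · refine Computable.option_casesOn (Computable.decode.comp Computable.snd) (Computable.const [])
      (.cond (hR.comp Computable.snd) ?_ (Computable.const []))
    exact Primrec.list_cons.to_comp.comp
      (hc.comp (Computable.fst.comp Computable.fst) Computable.snd) (Computable.const [])
  · cases hj : (decode n : Option J) with
    | none => simp [hj] at hd
    | some j =>
      by_cases hRj : R j
      · obtain rfl : d = c a j := by simpa [hj, hRj] using hd
        exact h j hRj
      · simp [hj, hRj] at hd
  · exact h (encode j) (c a j) (by simp [hj])

theorem of_clause {c : α → Clause V} (hc : Computable c) :
    IsClausal fun a v => (c a).SatisfiedBy v :=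
  ⟨fun a _ => [c a], Primrec.list_cons.to_comp.comp (hc.comp Computable.fst)
    (Computable.const []), by simp⟩

theorem forall₃_not {R : V × V × V → Prop} (hR : PrimrecPred R) :
    IsClausal fun (_ : α) v => ∀ a ∈ v, ∀ b ∈ v, ∀ c ∈ v, ¬ R (a, b, c) := by
  have hc : Primrec₂ fun (_ : α) (q : V × V × V) => (([q.1, q.2.1, q.2.2], []) : Clause V) := by
    refine Primrec.pair ?_ (Primrec.const [])
    exact Primrec.list_cons.comp (Primrec.fst.comp Primrec.snd) <|
      Primrec.list_cons.comp (Primrec.fst.comp (Primrec.snd.comp Primrec.snd)) <|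
        Primrec.list_cons.comp (Primrec.snd.comp (Primrec.snd.comp Primrec.snd)) (Primrec.const [])
  refine (of_imp hR.computablePred hc.to_comp).congr fun _ v => ⟨fun h q hq hv => ?_,
    fun h a ha b hb c hc hq => ?_⟩
  · exact (h _ (hv _ (by simp)) _ (hv _ (by simp)) _ (hv _ (by simp)) hq).elim
  · simpa using h (a, b, c) hq (by simp [ha, hb, hc])

/-- Effective compactness: by compactness of the space of valuations, a clause family is
satisfiable iff each of its finite parts is. -/
theorem pi01 (hP : IsClausal P) {A : α → Prop} (hA : ∀ a, A a ↔ ∃ v, P a v) : Pi01 A := by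
  obtain ⟨cl, hcl, h⟩ := hP
  classical
  have hsat := (primrecRel_isSatisfiableBelow (V := V)).decide
  refine ⟨fun a n => decide (IsSatisfiableBelow ((List.range n).flatMap (cl a)) n),
    hsat.to_comp.comp (computable₂_list_range_flatMap hcl) Computable.snd, fun a => ?_⟩
  simp only [decide_eq_true_iff, hA, h]
  constructor
  · rintro ⟨v, hv⟩ n
    refine isSatisfiableBelow_of_satisfiedBy (v := v) (fun c hc => ?_) n
    obtain ⟨j, -, hc⟩ := List.mem_flatMap.1 hc
    exact hv j c hc
  · intro hstage
    choose s _ hs using hstage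
    refine ⟨{i | ∀ᶠ n in (hyperfilter ℕ : Filter ℕ), i ∈ bitValuation V (s n)},
      fun j c hc => Clause.satisfiedBy_of_eventually ?_⟩
    refine Nat.hyperfilter_le_atTop ?_
    filter_upwards [c.eventually_isBounded, eventually_gt_atTop j] with n hn hjn
    exact hs n c (List.mem_flatMap.2 ⟨j, List.mem_range.2 hjn, hc⟩) hn

end IsClausal

end

/-! ### Developing local data -/

section Developing

variable {E : Type*} [PseudoMetricSpace E] {ι : Type*}
  {supp : ι → Set E} {Adj : ι → ι → Prop} {δ : ℝ}

/-- Local data for building a covering of `E` by pieces `supp a`, where `Adj` records which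
pieces are declared to be neighbours: around any piece there are enough neighbours to cover a
uniform neighbourhood, and neighbours of a common piece that come close are neighbours. -/
structure IsDevelopable (supp : ι → Set E) (Adj : ι → ι → Prop) (δ : ℝ) : Prop where
  pos : 0 < δ
  refl : ∀ a, Adj a a
  symm : ∀ {a b}, Adj a b → Adj b a
  adj_of_dist_le : ∀ {a b c}, Adj a b → Adj a c →
    ∀ {p q}, p ∈ supp b → q ∈ supp c → dist p q ≤ δ → Adj b c
  exists_adj : ∀ {a p}, p ∈ supp a → ∀ {q}, dist q p ≤ 2 * δ → ∃ b, Adj a b ∧ q ∈ supp b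

/-- A choice, for every point of `s`, of a piece containing it, such that nearby points get
neighbouring pieces. -/
structure IsSectionOn (supp : ι → Set E) (Adj : ι → ι → Prop) (δ : ℝ) (s : Set E) (τ : E → ι) :
    Prop where
  mem : ∀ {p}, p ∈ s → p ∈ supp (τ p)
  adj : ∀ {p q}, p ∈ s → q ∈ s → dist p q ≤ δ → Adj (τ p) (τ q)

namespace IsDevelopable

theorem adj_of_mem (h : IsDevelopable supp Adj δ) {a b c : ι} (hb : Adj a b) (hc : Adj a c)
    {p : E} (hpb : p ∈ supp b) (hpc : p ∈ supp c) : Adj b c :=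
  h.adj_of_dist_le hb hc hpb hpc ((dist_self p).trans_le h.pos.le)

theorem adj_of_adj (h : IsDevelopable supp Adj δ) {a a' b b' : ι} {p p' q q' : E}
    (haa' : Adj a a') (hab : Adj a b) (hab' : Adj a' b') (hp : p ∈ supp a) (hp' : p' ∈ supp a')
    (hq : q ∈ supp b) (hq' : q' ∈ supp b') (hqp : dist q p ≤ δ) (hqp' : dist q' p' ≤ δ)
    (hqq' : dist q q' ≤ δ) : Adj b b' := by
  have hq'p : dist q' p ≤ 2 * δ := by
    linarith [dist_triangle q' q p, dist_comm q q']
  obtain ⟨c, hac, hq'c⟩ := h.exists_adj hp hq'p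
  have ha'c : Adj a' c := h.adj_of_dist_le haa' hac hp' hq'c (by rwa [dist_comm])
  have hcb' : Adj c b' := h.adj_of_mem ha'c hab' hq'c hq'
  have hcb : Adj c b := h.adj_of_dist_le hac hab hq'c hq (by rwa [dist_comm])
  exact h.adj_of_dist_le hcb hcb' hq hq' hqq'

theorem adj_of_mem_supp (h : IsDevelopable supp Adj δ) {τ : E → ι}
    (hτ : IsSectionOn supp Adj δ univ τ) {p : E} (hp : IsPreconnected (supp (τ p))) {q : E}
    (hq : q ∈ supp (τ p)) : Adj (τ p) (τ q) := by
  have hnear (x y : E) (hy : y ∈ supp (τ p)) (hxy : dist x y ≤ δ) (hx : Adj (τ p) (τ x)) :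
      Adj (τ p) (τ y) :=
    h.adj_of_mem (h.symm hx) (hτ.adj trivial trivial hxy) hy (hτ.mem trivial)
  have hconst : Adj (τ p) (τ p) ↔ Adj (τ p) (τ q) := by
    refine hp.induction₂ (fun x y => Adj (τ p) (τ x) ↔ Adj (τ p) (τ y)) (fun x hx => ?_)
      (fun _ _ _ _ _ _ => Iff.trans) (fun _ _ _ _ => Iff.symm) (hτ.mem trivial) hq
    filter_upwards [mem_nhdsWithin_of_mem_nhds (closedBall_mem_nhds x h.pos),
      self_mem_nhdsWithin] with y hyx hy
    exact ⟨hnear x y hy (by rw [dist_comm]; exact hyx), hnear y x hx hyx⟩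
  exact hconst.1 (h.refl _)

end IsDevelopable

end Developing

section Normed

variable {E : Type*} [NormedAddCommGroup E] [NormedSpace ℝ E] {ι : Type*}
  {supp : ι → Set E} {Adj : ι → ι → Prop} {δ : ℝ}

namespace IsDevelopable

/-- The new tiles are neighbours of the tiles chosen at the points obtained by shrinking the
larger ball onto the smaller one, a contraction which moves points by at most `δ`. -/
theorem exists_extension (h : IsDevelopable supp Adj δ) {r : ℝ} (hr : 0 ≤ r) {τ : E → ι}
    (hτ : IsSectionOn supp Adj δ (closedBall 0 r) τ) :
    ∃ τ', IsSectionOn supp Adj δ (closedBall 0 (r + δ)) τ' ∧ EqOn τ' τ (closedBall 0 r) := by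
  have hrδ : 0 < r + δ := add_pos_of_nonneg_of_pos hr h.pos
  let c : ℝ := r / (r + δ)
  have hc : 0 ≤ c := by positivity
  have hc₁ : c ≤ 1 := (div_le_one hrδ).2 (le_add_of_nonneg_right h.pos.le)
  have hmem {q : E} (hq : q ∈ closedBall 0 (r + δ)) : c • q ∈ closedBall (0 : E) r := by
    rw [mem_closedBall_zero_iff] at hq ⊢
    calc ‖c • q‖ = c * ‖q‖ := by rw [norm_smul, Real.norm_of_nonneg hc]
      _ ≤ c * (r + δ) := by gcongr
      _ = r := div_mul_cancel₀ r hrδ.ne'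
  have hnear {q : E} (hq : q ∈ closedBall 0 (r + δ)) : dist q (c • q) ≤ δ := by
    rw [mem_closedBall_zero_iff] at hq
    calc dist q (c • q) = (1 - c) * ‖q‖ := by
          rw [dist_eq_norm, ← Real.norm_of_nonneg (sub_nonneg.2 hc₁), ← norm_smul, sub_smul,
            one_smul]
      _ ≤ (1 - c) * (r + δ) := by gcongr
      _ = δ := by rw [one_sub_mul, div_mul_cancel₀ r hrδ.ne', add_sub_cancel_left]
  have hcontr (q q' : E) : dist (c • q) (c • q') ≤ dist q q' := by
    rw [dist_smul₀, Real.norm_of_nonneg hc]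
    exact mul_le_of_le_one_left dist_nonneg hc₁
  have hnext (q : E) : ∃ a, (q ∈ closedBall 0 (r + δ) → Adj (τ (c • q)) a ∧ q ∈ supp a) ∧
      (q ∈ closedBall 0 r → a = τ q) := by
    by_cases hqr : q ∈ closedBall 0 r
    · exact ⟨τ q, fun hq => ⟨hτ.adj (hmem hq) hqr (by rw [dist_comm]; exact hnear hq),
        hτ.mem hqr⟩, fun _ => rfl⟩
    · by_cases hq : q ∈ closedBall 0 (r + δ)
      · obtain ⟨a, ha⟩ := h.exists_adj (hτ.mem (hmem hq))
          ((hnear hq).trans (le_mul_of_one_le_left h.pos.le one_le_two))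
        exact ⟨a, fun _ => ha, fun h => absurd h hqr⟩
      · exact ⟨τ q, fun h => absurd h hq, fun _ => rfl⟩
  choose τ' hτ' heq using hnext
  refine ⟨τ', ⟨fun hq => (hτ' _ hq).2, fun {q q'} hq hq' hd => ?_⟩, heq⟩
  exact h.adj_of_adj (hτ.adj (hmem hq) (hmem hq') ((hcontr q q').trans hd)) (hτ' q hq).1
    (hτ' q' hq').1 (hτ.mem (hmem hq)) (hτ.mem (hmem hq')) (hτ' q hq).2 (hτ' q' hq').2
    (hnear hq) (hnear hq') hd

theorem exists_section_univ (h : IsDevelopable supp Adj δ) {τ₀ : E → ι}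
    (hτ₀ : IsSectionOn supp Adj δ (closedBall 0 0) τ₀) :
    ∃ τ, IsSectionOn supp Adj δ univ τ := by
  let B (n : ℕ) : Set E := closedBall 0 (n * δ)
  have hstep (n : ℕ) (τ : {τ // IsSectionOn supp Adj δ (B n) τ}) :
      ∃ τ' : {τ // IsSectionOn supp Adj δ (B (n + 1)) τ}, EqOn τ'.1 τ.1 (B n) := by
    obtain ⟨τ', hτ', heq⟩ := h.exists_extension (mul_nonneg n.cast_nonneg h.pos.le) τ.2
    refine ⟨⟨τ', ?_⟩, heq⟩
    rwa [← add_one_mul, ← Nat.cast_succ] at hτ'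
  choose next hnext using hstep
  let σ (n : ℕ) : {τ // IsSectionOn supp Adj δ (B n) τ} :=
    Nat.rec ⟨τ₀, by simpa [B] using hτ₀⟩ next n
  have hB {m n : ℕ} (hmn : m ≤ n) : B m ⊆ B n := closedBall_subset_closedBall <|
    mul_le_mul_of_nonneg_right (Nat.cast_le.2 hmn) h.pos.le
  have hσ {m n : ℕ} (hmn : m ≤ n) : EqOn (σ n).1 (σ m).1 (B m) := by
    induction n, hmn using Nat.le_induction with
    | base => exact eqOn_refl _ _
    | succ n hmn ih => exact ((hnext n (σ n)).mono (hB hmn)).trans ih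
  let N (q : E) : ℕ := ⌈‖q‖ / δ⌉₊
  have hN (q : E) : q ∈ B (N q) :=
    mem_closedBall_zero_iff.2 ((div_le_iff₀ h.pos).1 (Nat.le_ceil _))
  refine ⟨fun q => (σ (N q)).1 q, fun {p} _ => (σ (N p)).2.mem (hN p), fun {p q} _ _ hd => ?_⟩
  have hadj := (σ (max (N p) (N q))).2.adj (hB (le_max_left _ _) (hN p))
    (hB (le_max_right _ _) (hN q)) hd
  rwa [hσ (le_max_left _ _) (hN p), hσ (le_max_right _ _) (hN q)] at hadj

theorem exists_cover (h : IsDevelopable supp Adj δ) (hsupp : ∀ a, IsPreconnected (supp a))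
    {a₀ : ι} (h₀ : 0 ∈ supp a₀) :
    ∃ Y : Set ι, (⋃ a ∈ Y, supp a) = univ ∧
      ∀ a ∈ Y, ∀ b ∈ Y, (supp a ∩ supp b).Nonempty → Adj a b := by
  have hτ₀ : IsSectionOn supp Adj δ (closedBall 0 0) fun _ => a₀ :=
    ⟨fun {p} hp => by rwa [show p = 0 by simpa using hp], fun _ _ _ => h.refl a₀⟩
  obtain ⟨τ, hτ⟩ := h.exists_section_univ hτ₀
  refine ⟨range τ, eq_univ_of_forall fun p => mem_biUnion ⟨p, rfl⟩ (hτ.mem trivial), ?_⟩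
  rintro _ ⟨p, rfl⟩ _ ⟨q, rfl⟩ ⟨z, hzp, hzq⟩
  exact h.adj_of_mem (h.symm (h.adj_of_mem_supp hτ (hsupp _) hzp))
    (h.symm (h.adj_of_mem_supp hτ (hsupp _) hzq)) hzp hzq

end IsDevelopable

end Normed

/-! ### Rhombi and their translates -/

theorem segment_eq_segment_imp {E : Type*} [AddCommGroup E] [Module ℝ E] {a b c d : E}
    (h : segment ℝ a b = segment ℝ c d) : a = c ∨ a = d := by
  have ha : Wbtw ℝ c a d := mem_segment_iff_wbtw.1 (h ▸ left_mem_segment ℝ a b)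
  have hc : Wbtw ℝ a c b := mem_segment_iff_wbtw.1 (h ▸ left_mem_segment ℝ c d)
  have hd : Wbtw ℝ a d b := mem_segment_iff_wbtw.1 (h ▸ right_mem_segment ℝ c d)
  obtain ⟨s, ⟨hs, -⟩, rfl⟩ := hc
  obtain ⟨t, ⟨ht, -⟩, rfl⟩ := hd
  rcases wbtw_or_wbtw_smul_vadd_of_nonneg a (b - a) hs ht with hcd | hdc
  · exact .inl ((wbtw_swap_left_iff ℝ _).1 ⟨hcd, ha⟩)
  · exact .inr ((wbtw_swap_left_iff ℝ _).1 ⟨hdc, ha.symm⟩)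

namespace Rhombus

theorem vertices_finite (r : Rhombus) : r.vertices.Finite := by
  simp [vertices]

theorem exists_edge_eq_segment (r : Rhombus) (i : Fin 4) :
    ∃ a ∈ r.vertices, ∃ b ∈ r.vertices, r.edge i = segment ℝ a b := by
  fin_cases i
  · exact ⟨r.pos, by simp [vertices], r.pos + r.u, by simp [vertices], rfl⟩
  · exact ⟨r.pos + r.u, by simp [vertices], r.pos + r.u + r.v, by simp [vertices], rfl⟩
  · exact ⟨r.pos + r.u + r.v, by simp [vertices], r.pos + r.v, by simp [vertices], rfl⟩
  · exact ⟨r.pos + r.v, by simp [vertices], r.pos, by simp [vertices], rfl⟩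

theorem support_eq_image_parallelepiped (r : Rhombus) :
    r.support = (r.pos + ·) '' parallelepiped ![r.u, r.v] := by
  ext p
  constructor
  · rintro ⟨s, t, hs, ht, rfl⟩
    refine ⟨s • r.u + t • r.v, (mem_parallelepiped_iff _ _).2 ⟨![s, t], ?_, by simp⟩,
      (add_assoc _ _ _).symm⟩
    simpa [Pi.le_def, Fin.forall_fin_two] using ⟨⟨hs.1, ht.1⟩, hs.2, ht.2⟩
  · rintro ⟨q, hq, rfl⟩
    obtain ⟨t, ht, rfl⟩ := (mem_parallelepiped_iff _ _).1 hq
    exact ⟨t 0, t 1, ⟨ht.1 0, ht.2 0⟩, ⟨ht.1 1, ht.2 1⟩, by simp [add_assoc]⟩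

theorem convex_support (r : Rhombus) : Convex ℝ r.support := by
  rw [support_eq_image_parallelepiped]
  exact (convex_parallelepiped _).translate r.pos

theorem isCompact_support (r : Rhombus) : IsCompact r.support := by
  rw [support_eq_image_parallelepiped]
  exact (isCompact_Icc.image (by fun_prop)).image (by fun_prop)

theorem vertices_subset_support (r : Rhombus) : r.vertices ⊆ r.support := by
  rintro p (rfl | rfl | rfl | rfl)
  · exact ⟨0, 0, by simp, by simp, by simp⟩
  · exact ⟨1, 0, by simp, by simp, by simp⟩
  · exact ⟨0, 1, by simp, by simp, by simp⟩
  · exact ⟨1, 1, by simp, by simp, by simp⟩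

theorem pos_mem_vertices (r : Rhombus) : r.pos ∈ r.vertices :=
  mem_insert _ _

theorem edge_subset_support (r : Rhombus) (i : Fin 4) : r.edge i ⊆ r.support := by
  obtain ⟨a, ha, b, hb, h⟩ := r.exists_edge_eq_segment i
  rw [h]
  exact r.convex_support.segment_subset (r.vertices_subset_support ha)
    (r.vertices_subset_support hb)

theorem edge_nonempty (r : Rhombus) (i : Fin 4) : (r.edge i).Nonempty := by
  obtain ⟨a, -, b, -, h⟩ := r.exists_edge_eq_segment i
  exact h ▸ ⟨a, left_mem_segment ℝ a b⟩

theorem IsValid.interior_support_nonempty {r : Rhombus} (h : r.IsValid) :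
    (interior r.support).Nonempty := by
  let b := basisOfLinearIndependentOfCardEqFinrank h.1 (by simp)
  have hb : (interior (parallelepiped ![r.u, r.v])).Nonempty := by
    simpa [b] using b.parallelepiped.interior_nonempty
  rw [support_eq_image_parallelepiped]
  exact (hb.image _).mono ((isOpenMap_add_left r.pos).image_interior_subset _)

/-- Two rhombi have a common vertex; this is the adjacency relation between tiles. -/
def SharesVertex (r s : Rhombus) : Prop :=
  (r.vertices ∩ s.vertices).Nonempty

theorem SharesVertex.refl (r : Rhombus) : SharesVertex r r :=
  ⟨r.pos, r.pos_mem_vertices, r.pos_mem_vertices⟩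

theorem SharesVertex.symm {r s : Rhombus} (h : SharesVertex r s) : SharesVertex s r := by
  rwa [SharesVertex, inter_comm]

theorem sharesVertex_of_edge_eq {r s : Rhombus} {i j : Fin 4} (h : r.edge i = s.edge j) :
    SharesVertex r s := by
  obtain ⟨a, ha, b, -, hab⟩ := r.exists_edge_eq_segment i
  obtain ⟨c, hc, d, hd, hcd⟩ := s.exists_edge_eq_segment j
  rcases segment_eq_segment_imp (hab ▸ hcd ▸ h) with rfl | rfl
  · exact ⟨a, ha, hc⟩
  · exact ⟨a, ha, hd⟩

end Rhombus

theorem EdgeToEdgePair.sharesVertex {r s : Rhombus} (h : EdgeToEdgePair r s)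
    (hrs : (r.support ∩ s.support).Nonempty) : SharesVertex r s := by
  rcases h with h | ⟨p, hr, hs, -⟩ | ⟨_, ⟨i, rfl⟩, ⟨j, hj⟩, -⟩
  · exact (hrs.ne_empty h).elim
  · exact ⟨p, hr, hs⟩
  · exact sharesVertex_of_edge_eq hj.symm

namespace Rhombus

@[simp] theorem translate_zero (r : Rhombus) : r.translate 0 = r := by
  simp [translate]

@[simp] theorem translate_translate (r : Rhombus) (w w' : Pt) :
    (r.translate w).translate w' = r.translate (w + w') := by
  simp [translate, add_assoc]

theorem translate_injective (w : Pt) : Function.Injective (translate · w) := fun r s h => by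
  simpa using congrArg (translate · (-w)) h

theorem support_translate (r : Rhombus) (w : Pt) :
    (r.translate w).support = (w + ·) '' r.support := by
  simp only [support_eq_image_parallelepiped, image_image, translate, add_left_comm, add_assoc]

theorem vertices_translate (r : Rhombus) (w : Pt) :
    (r.translate w).vertices = (w + ·) '' r.vertices := by
  simp only [vertices, translate, image_insert_eq, image_singleton, add_comm, add_left_comm]

theorem edge_translate (r : Rhombus) (w : Pt) (i : Fin 4) :
    (r.translate w).edge i = (w + ·) '' r.edge i := by
  fin_cases i <;>
    simp only [edge, translate, segment_translate_image, add_assoc, Fin.zero_eta,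
      Fin.mk_one, Fin.reduceFinMk, Matrix.cons_val, add_comm r.pos w]

theorem edge_translate_eq_iff {r s : Rhombus} {i j : Fin 4} (w : Pt) :
    (r.translate w).edge i = (s.translate w).edge j ↔ r.edge i = s.edge j := by
  rw [edge_translate, edge_translate, (image_injective.2 (add_right_injective w)).eq_iff]

theorem sharesVertex_translate_iff {r s : Rhombus} (w : Pt) :
    SharesVertex (r.translate w) (s.translate w) ↔ SharesVertex r s := by
  rw [SharesVertex, vertices_translate, vertices_translate,
    ← image_inter (add_right_injective w), image_nonempty, SharesVertex]

theorem SharesVertex.mem_sub {r s : Rhombus} {w : Pt} (h : SharesVertex r (s.translate w)) :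
    w ∈ image2 (· - ·) r.vertices s.vertices := by
  rw [SharesVertex, vertices_translate] at h
  obtain ⟨_, hr, q, hs, rfl⟩ := h
  exact ⟨w + q, hr, q, hs, add_sub_cancel_right w q⟩

end Rhombus

theorem EdgeToEdgePair.translate {r s : Rhombus} (h : EdgeToEdgePair r s) (w : Pt) :
    EdgeToEdgePair (r.translate w) (s.translate w) := by
  rw [EdgeToEdgePair, support_translate, support_translate, ← image_inter (add_right_injective w)]
  rcases h with h | ⟨p, hr, hs, h⟩ | ⟨_, ⟨i, rfl⟩, ⟨j, hj⟩, h⟩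
  · exact .inl (by rw [h, image_empty])
  · refine .inr (.inl ⟨w + p, ?_, ?_, by rw [h, image_singleton]⟩)
    · exact r.vertices_translate w ▸ mem_image_of_mem _ hr
    · exact s.vertices_translate w ▸ mem_image_of_mem _ hs
  · exact .inr (.inr ⟨_, ⟨i, r.edge_translate w i⟩, ⟨j, by rw [s.edge_translate, hj]⟩, by rw [h]⟩)

theorem edgeToEdgePair_translate_iff {r s : Rhombus} (w : Pt) :
    EdgeToEdgePair (r.translate w) (s.translate w) ↔ EdgeToEdgePair r s :=
  ⟨fun h => by simpa using h.translate (-w), fun h => h.translate w⟩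

/-! ### Surrounded tiles and local finiteness -/

theorem eventually_cthickening_subset {E : Type*} [PseudoMetricSpace E] {K U : Set E}
    (hK : IsCompact K) (hU : U ∈ 𝓝ˢ K) : ∀ᶠ δ in 𝓝[>] 0, cthickening δ K ⊆ U := by
  obtain ⟨ε, hε, h⟩ := (hasBasis_nhdsSet_cthickening hK).mem_iff.1 hU
  filter_upwards [Ioc_mem_nhdsGT hε] with δ hδ
  exact (cthickening_mono hδ.2 K).trans h

theorem eventually_inter_nonempty_of_dist_le {E : Type*} [PseudoMetricSpace E] {K L : Set E}
    (hK : IsCompact K) (hL : IsClosed L) :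
    ∀ᶠ δ in 𝓝[>] 0, ∀ p ∈ K, ∀ q ∈ L, dist p q ≤ δ → (K ∩ L).Nonempty := by
  by_cases hKL : (K ∩ L).Nonempty
  · exact .of_forall fun _ _ _ _ _ _ => hKL
  have hLK : Lᶜ ∈ 𝓝ˢ K := hL.isOpen_compl.mem_nhdsSet.2
    (disjoint_iff_inter_eq_empty.2 (not_nonempty_iff_eq_empty.1 hKL)).subset_compl_right
  filter_upwards [eventually_cthickening_subset hK hLK] with δ hδ p hp q hq hpq
  exact (hδ (mem_cthickening_of_dist_le q p δ K hp (by rwa [dist_comm])) hq).elim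

/-- The patch `Y` covers a neighbourhood of the rhombus `r`. -/
def Surrounds (Y : Set Rhombus) (r : Rhombus) : Prop :=
  PatchSupport Y ∈ 𝓝ˢ r.support

theorem Surrounds.mono {Y Z : Set Rhombus} {r : Rhombus} (h : Surrounds Y r) (hYZ : Y ⊆ Z) :
    Surrounds Z r :=
  Filter.mem_of_superset h (biUnion_subset_biUnion_left hYZ)

theorem patchSupport_translate (Y : Set Rhombus) (w : Pt) :
    PatchSupport (translatePatch Y w) = (w + ·) '' PatchSupport Y := by
  simp only [PatchSupport, translatePatch, biUnion_image, support_translate, image_iUnion]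

theorem Surrounds.translate {Y : Set Rhombus} {r : Rhombus} (h : Surrounds Y r) (w : Pt) :
    Surrounds (translatePatch Y w) (r.translate w) := by
  rw [Surrounds, patchSupport_translate, support_translate,
    ← (isOpenMap_add_left w).map_nhdsSet_eq (by fun_prop)]
  exact Filter.image_mem_map h

theorem IsTiling.eq_or_edgeToEdgePair {x : Set Rhombus} (hx : IsTiling x) {r s : Rhombus}
    (hr : r ∈ x) (hs : s ∈ x) : r = s ∨ EdgeToEdgePair r s :=
  or_iff_not_imp_left.2 (hx.2.2 r hr s hs)

theorem IsTiling.sharesVertex {x : Set Rhombus} (hx : IsTiling x) {r s : Rhombus}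
    (hr : r ∈ x) (hs : s ∈ x) (hrs : (r.support ∩ s.support).Nonempty) : SharesVertex r s := by
  obtain rfl | h := hx.eq_or_edgeToEdgePair hr hs
  · exact .refl r
  · exact h.sharesVertex hrs

theorem Rhombus.SameShape.translate_eq {r s : Rhombus} (h : r.SameShape s) :
    r.translate (s.pos - r.pos) = s := by
  cases s
  simp [Rhombus.translate, h.1, h.2]

theorem Rhombus.SameShape.symm {r s : Rhombus} (h : r.SameShape s) : s.SameShape r :=
  ⟨h.1.symm, h.2.symm⟩

theorem Rhombus.SameShape.trans {r s t : Rhombus} (h : r.SameShape s) (h' : s.SameShape t) :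
    r.SameShape t :=
  ⟨h.1.trans h'.1, h.2.trans h'.2⟩

theorem Rhombus.IsValid.exists_inter_support_nonempty {t : Rhombus} (ht : t.IsValid) :
    ∃ c > 0, ∀ {r s : Rhombus}, r.SameShape t → s.SameShape t → dist r.pos s.pos < c →
      (r.support ∩ s.support).Nonempty := by
  obtain ⟨p, hp⟩ := ht.interior_support_nonempty
  obtain ⟨c, hc, hball⟩ := Metric.isOpen_iff.1 isOpen_interior p hp
  refine ⟨c, hc, fun {r s} hr hs hrs => ?_⟩
  rw [← hr.symm.translate_eq, ← hs.symm.translate_eq, support_translate, support_translate]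
  refine ⟨r.pos - t.pos + (p + (s.pos - r.pos)), mem_image_of_mem _ (interior_subset (hball ?_)),
    p, interior_subset hp, by simp only; abel⟩
  rwa [mem_ball, dist_self_add_left, ← dist_eq_norm, dist_comm]

theorem IsTiling.exists_finite_sameShape_ball {x : Set Rhombus} (hx : IsTiling x) {t : Rhombus}
    (ht : t.IsValid) : ∃ c > 0, ∀ p, {r ∈ x | r.SameShape t ∧ r.pos ∈ ball p c}.Finite := by
  obtain ⟨c, hc, hoverlap⟩ := ht.exists_inter_support_nonempty
  refine ⟨c / 2, half_pos hc, fun p => ?_⟩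
  rcases eq_empty_or_nonempty {r ∈ x | r.SameShape t ∧ r.pos ∈ ball p (c / 2)} with h | ⟨r, hr⟩
  · exact h ▸ finite_empty
  refine ((r.vertices_finite.image2 (· - ·) r.vertices_finite).image r.translate).subset ?_
  rintro s hs
  have hrs : dist r.pos s.pos < c := by
    linarith [dist_triangle_right r.pos s.pos p, mem_ball.1 hr.2.2, mem_ball.1 hs.2.2]
  have hsv : SharesVertex r s := hx.sharesVertex hr.1 hs.1 (hoverlap hr.2.1 hs.2.1 hrs)
  have heq : r.translate (s.pos - r.pos) = s := (hr.2.1.trans hs.2.1.symm).translate_eq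
  refine ⟨s.pos - r.pos, SharesVertex.mem_sub ?_, heq⟩
  rwa [heq]

theorem IsTiling.finite_sameShape {x : Set Rhombus} (hx : IsTiling x) {t : Rhombus}
    (ht : t.IsValid) {K : Set Pt} (hK : IsCompact K) :
    {r ∈ x | r.SameShape t ∧ r.pos ∈ K}.Finite := by
  obtain ⟨c, hc, hfin⟩ := hx.exists_finite_sameShape_ball ht
  refine hK.induction_on (p := fun s => {r ∈ x | r.SameShape t ∧ r.pos ∈ s}.Finite) (by simp)
    (fun s s' hss' hs' => hs'.subset fun r hr => ⟨hr.1, hr.2.1, hss' hr.2.2⟩)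
    (fun s s' hs hs' => (hs.union hs').subset ?_)
    (fun p _ => ⟨ball p c, mem_nhdsWithin_of_mem_nhds (ball_mem_nhds p hc), hfin p⟩)
  rintro r ⟨hr, hrt, hrs | hrs'⟩
  · exact .inl ⟨hr, hrt, hrs⟩
  · exact .inr ⟨hr, hrt, hrs'⟩

theorem Rhombus.support_subset_closedBall (r : Rhombus) :
    r.support ⊆ closedBall r.pos (‖r.u‖ + ‖r.v‖) := by
  rintro _ ⟨s, t, ⟨hs0, hs1⟩, ⟨ht0, ht1⟩, rfl⟩
  rw [mem_closedBall, dist_eq_norm, add_assoc, add_sub_cancel_left]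
  refine (norm_add_le _ _).trans (add_le_add ?_ ?_)
  · rw [norm_smul, Real.norm_of_nonneg hs0]
    exact mul_le_of_le_one_left (norm_nonneg _) hs1
  · rw [norm_smul, Real.norm_of_nonneg ht0]
    exact mul_le_of_le_one_left (norm_nonneg _) ht1

theorem IsTilingOn.locallyFinite {T x : Set Rhombus} (hT : T.Finite) (hx : IsTilingOn T x) :
    LocallyFinite fun r : x => (r : Rhombus).support := by
  intro p
  refine ⟨closedBall p 1, closedBall_mem_nhds p one_pos, ?_⟩
  have hfin : (⋃ t ∈ {t ∈ T | t.IsValid}, {r ∈ x | r.SameShape t ∧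
      r.pos ∈ closedBall p (1 + (‖t.u‖ + ‖t.v‖))}).Finite :=
    (hT.sep _).biUnion fun t ht => hx.1.finite_sameShape ht.2 (isCompact_closedBall _ _)
  refine .of_finite_image (f := Subtype.val) (hfin.subset ?_) Subtype.val_injective.injOn
  rintro _ ⟨⟨r, hr⟩, ⟨q, hqr, hqp⟩, rfl⟩
  obtain ⟨t, ht, hrt⟩ := hx.2 r hr
  have htv : t.IsValid := by
    rw [IsValid, ← hrt.1, ← hrt.2]
    exact hx.1.1 r hr
  refine mem_biUnion (show t ∈ {t ∈ T | t.IsValid} from ⟨ht, htv⟩) ⟨hr, hrt, ?_⟩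
  have hqr' := mem_closedBall.1 (r.support_subset_closedBall hqr)
  rw [hrt.1, hrt.2] at hqr'
  exact (dist_triangle_left r.pos p q).trans
    ((add_comm _ _).trans_le (add_le_add (mem_closedBall.1 hqp) hqr'))

theorem IsTilingOn.surrounds {T x : Set Rhombus} (hT : T.Finite) (hx : IsTilingOn T x)
    {r : Rhombus} (hr : r ∈ x) : Surrounds {s ∈ x | SharesVertex r s} r := by
  let far : Set Pt := ⋃ s : {s : x // ¬ SharesVertex r s}, (s : Rhombus).support
  have hclosed : IsClosed far :=
    ((hx.locallyFinite hT).comp_injective Subtype.val_injective).isClosed_iUnion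
      fun s => (s : Rhombus).isCompact_support.isClosed
  have hdisj : r.support ⊆ farᶜ := fun p hp hfar => by
    obtain ⟨s, hps⟩ := mem_iUnion.1 hfar
    exact s.2 (hx.1.sharesVertex hr s.1.2 ⟨p, hp, hps⟩)
  refine Filter.mem_of_superset (hclosed.isOpen_compl.mem_nhdsSet.2 hdisj) fun q hq => ?_
  obtain ⟨s, hs, hqs⟩ := mem_iUnion₂.1 (hx.1.2.1.symm ▸ mem_univ q)
  exact mem_biUnion ⟨hs, by_contra fun hrs => hq (mem_iUnion.2 ⟨⟨⟨s, hs⟩, hrs⟩, hqs⟩)⟩ hqs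

/-! ### Coloured tilings on a lattice -/

namespace ColoredRhombus

/-- The condition that validity of a coloured tiling imposes on a pair of its tiles. For tiles of
the same shape it says that they have the same colours. -/
def Compatible (t s : ColoredRhombus) : Prop :=
  (t.shape ≠ s.shape → EdgeToEdgePair t.shape s.shape) ∧
    ∀ i j, t.shape.edge i = s.shape.edge j → (t.shape = s.shape → i = j) → t.color i = s.color j

theorem compatible_translate_iff {t s : ColoredRhombus} (w : Pt) :
    Compatible (t.translate w) (s.translate w) ↔ Compatible t s := by
  simp only [Compatible, ColoredRhombus.translate, ne_eq, (translate_injective w).eq_iff,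
    edgeToEdgePair_translate_iff, edge_translate_eq_iff]

theorem Compatible.sharesVertex {t s : ColoredRhombus} (h : t.Compatible s)
    (hts : (t.shape.support ∩ s.shape.support).Nonempty) : SharesVertex t.shape s.shape := by
  by_cases heq : t.shape = s.shape
  · exact heq ▸ .refl _
  · exact (h.1 heq).sharesVertex hts

theorem compatible_of_disjoint {t s : ColoredRhombus}
    (h : t.shape.support ∩ s.shape.support = ∅) : t.Compatible s := by
  refine ⟨fun _ => .inl h, fun i j hij _ => ?_⟩
  obtain ⟨p, hp⟩ := t.shape.edge_nonempty i
  exact (h.subset ⟨t.shape.edge_subset_support i hp,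
    s.shape.edge_subset_support j (hij ▸ hp)⟩).elim

end ColoredRhombus

theorem isColoredTiling_iff {x : Set ColoredRhombus} :
    IsColoredTiling x ↔ (∀ t ∈ x, t.shape.IsValid) ∧ (⋃ t ∈ x, t.shape.support) = univ ∧
      ∀ t ∈ x, ∀ s ∈ x, t.Compatible s := by
  simp only [IsColoredTiling, IsTiling, eraseColors, forall_mem_image, biUnion_image]
  constructor
  · rintro ⟨⟨hval, hcov, he2e⟩, hinj, hcol⟩
    refine ⟨hval, hcov, fun t ht s hs => ⟨he2e ht hs, fun i j hij heq => ?_⟩⟩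
    by_cases hts : t.shape = s.shape
    · rw [hinj t ht s hs hts, heq hts]
    · exact hcol t ht s hs hts i j hij
  · rintro ⟨hval, hcov, h⟩
    refine ⟨⟨hval, hcov, fun t ht s hs => (h t ht s hs).1⟩, ?_, ?_⟩
    · rintro ⟨r, c⟩ ht ⟨_, c'⟩ hs rfl
      congr
      exact funext fun i => (h _ ht _ hs).2 i i rfl fun _ => rfl
    · exact fun t ht s hs hts i j hij => (h t ht s hs).2 i j hij (hts · |>.elim)

/-- An index of a shape together with a position in `ℤ^m`. -/
abbrev Cell (k m : ℕ) : Type := Fin k × Posn m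

/-- A symbolic Wang tile placed at a position in `ℤ^m`. -/
abbrev PlacedTile (k m : ℕ) : Type := SymbTile k × Posn m

/-- Translation of a cell. -/
def Cell.shift {k m : ℕ} (z : Cell k m) (w : Posn m) : Cell k m := (z.1, z.2 + w)

/-- The cell of a placed tile, its colours being forgotten. -/
def PlacedTile.cell {k m : ℕ} (a : PlacedTile k m) : Cell k m := (a.1.1, a.2)

theorem Cell.shift_neg_snd {k m : ℕ} (z : Cell k m) : z.shift (-z.2) = (z.1, 0) := by
  simp [shift]

theorem Cell.shift_neg_shift {k m : ℕ} (z : Cell k m) (w : Posn m) :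
    (z.shift (-w)).shift w = z := by
  simp [shift]

/-- An identification with `ℤ^m` of a group of translations containing the edge vectors and the
positions of the shapes. -/
structure EdgeLattice {k : ℕ} (shapes : Fin k → Rhombus) (m : ℕ) where
  toHom : Posn m →+ Pt
  injective : Function.Injective toHom
  u : Fin k → Posn m
  v : Fin k → Posn m
  pos : Fin k → Posn m
  map_u : ∀ i, toHom (u i) = (shapes i).u
  map_v : ∀ i, toHom (v i) = (shapes i).v
  map_pos : ∀ i, toHom (pos i) = (shapes i).pos

variable {k m : ℕ} {shapes : Fin k → Rhombus}

theorem exists_edgeLattice (shapes : Fin k → Rhombus) :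
    ∃ m, Nonempty (EdgeLattice shapes m) := by
  let H : Submodule ℤ Pt := Submodule.span ℤ
    (⋃ i, {(shapes i).u, (shapes i).v, (shapes i).pos})
  have hfin : Module.Finite ℤ H :=
    Module.Finite.span_of_finite ℤ (finite_iUnion fun i => by simp)
  have htf : IsAddTorsionFree Pt := IsAddTorsionFree.of_module_rat Pt
  let e : H ≃ₗ[ℤ] Posn (Module.finrank ℤ H) := (Module.finBasis ℤ H).equivFun
  have hmem (i : Fin k) {p : Pt}
      (hp : p ∈ ({(shapes i).u, (shapes i).v, (shapes i).pos} : Set Pt)) : p ∈ H :=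
    Submodule.subset_span (mem_iUnion_of_mem i hp)
  exact ⟨_, ⟨{
    toHom := (H.subtype.comp e.symm.toLinearMap).toAddMonoidHom
    injective := Subtype.val_injective.comp e.symm.injective
    u := fun i => e ⟨_, hmem i (.inl rfl)⟩
    v := fun i => e ⟨_, hmem i (.inr (.inl rfl))⟩
    pos := fun i => e ⟨_, hmem i (.inr (.inr rfl))⟩
    map_u := fun i => by simp
    map_v := fun i => by simp
    map_pos := fun i => by simp }⟩⟩

namespace EdgeLattice

variable (Λ : EdgeLattice shapes m)

/-- The rhombus coded by a cell. -/
def tile (z : Cell k m) : Rhombus := ⟨Λ.toHom z.2, (shapes z.1).u, (shapes z.1).v⟩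

/-- The coloured rhombus coded by a placed tile. -/
def coloredTile (a : PlacedTile k m) : ColoredRhombus := ⟨Λ.tile a.cell, a.1.colors⟩

/-- The rhombi coded by a set of placed tiles. -/
def tiles (v : Set (PlacedTile k m)) : Set Rhombus := Λ.tile '' (PlacedTile.cell '' v)

/-- Two cells are adjacent when their rhombi share a vertex. -/
def Adj (a b : Cell k m) : Prop := SharesVertex (Λ.tile a) (Λ.tile b)

theorem tile_shift (z : Cell k m) (w : Posn m) :
    Λ.tile (z.shift w) = (Λ.tile z).translate (Λ.toHom w) := by
  simp [tile, Cell.shift, Rhombus.translate]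

theorem sameShape_tile (z : Cell k m) : (Λ.tile z).SameShape (shapes z.1) :=
  ⟨rfl, rfl⟩

theorem adj_shift_iff {a b : Cell k m} (w : Posn m) :
    Λ.Adj (a.shift w) (b.shift w) ↔ Λ.Adj a b := by
  rw [Adj, tile_shift, tile_shift, sharesVertex_translate_iff, Adj]

/-- The cells adjacent to the cell of shape `i` at the origin. -/
def nbhd (i : Fin k) : Set (Cell k m) := {b | Λ.Adj (i, 0) b}

theorem adj_iff {a b : Cell k m} : Λ.Adj a b ↔ b.shift (-a.2) ∈ Λ.nbhd a.1 := by
  change _ ↔ Λ.Adj (a.1, 0) (b.shift (-a.2))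
  rw [← a.shift_neg_snd, adj_shift_iff]

theorem nbhd_finite (i : Fin k) : (Λ.nbhd i).Finite := by
  have hfin (j : Fin k) : {w | (j, w) ∈ Λ.nbhd i}.Finite := by
    refine .subset (((Λ.tile (i, 0)).vertices_finite.image2 (· - ·)
      (Λ.tile (j, 0)).vertices_finite).preimage Λ.injective.injOn) fun w hw => ?_
    refine SharesVertex.mem_sub (r := Λ.tile (i, 0)) ?_
    rw [← tile_shift, Cell.shift, zero_add]
    exact hw
  refine (finite_iUnion fun j => (hfin j).image (Prod.mk j)).subset fun z hz => ?_
  exact mem_iUnion.2 ⟨z.1, z.2, hz, rfl⟩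

theorem eq_tile {r : Rhombus} {j : Fin k} {w : Posn m} (hr : r.SameShape (shapes j))
    (hpos : r.pos = Λ.toHom w) : r = Λ.tile (j, w) := by
  obtain ⟨p, u, v⟩ := r
  obtain ⟨rfl, rfl⟩ := hr
  rw [tile, ← hpos]

theorem exists_eq_pos_add {r : Rhombus} {i : Fin k} (hr : r.SameShape (shapes i)) {p : Pt}
    (hp : p ∈ r.vertices) : ∃ w, p = r.pos + Λ.toHom w := by
  rcases hp with rfl | rfl | rfl | rfl
  · exact ⟨0, by simp⟩
  · exact ⟨Λ.u i, by rw [Λ.map_u, hr.1]⟩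
  · exact ⟨Λ.v i, by rw [Λ.map_v, hr.2]⟩
  · exact ⟨Λ.u i + Λ.v i, by rw [map_add, Λ.map_u, Λ.map_v, hr.1, hr.2, add_assoc]⟩

theorem exists_eq_tile_of_sharesVertex {z : Cell k m} {r : Rhombus} {j : Fin k}
    (hr : r.SameShape (shapes j)) (h : SharesVertex (Λ.tile z) r) : ∃ w, r = Λ.tile (j, w) := by
  obtain ⟨p, hpz, hpr⟩ := h
  obtain ⟨w, hw⟩ := Λ.exists_eq_pos_add (Λ.sameShape_tile z) hpz
  obtain ⟨w', hw'⟩ := Λ.exists_eq_pos_add hr hpr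
  refine ⟨z.2 + w - w', Λ.eq_tile hr ?_⟩
  rw [map_sub, map_add, eq_sub_iff_add_eq, ← hw']
  exact hw

theorem mem_support_shift_iff {z : Cell k m} {w : Posn m} {p : Pt} :
    p ∈ (Λ.tile (z.shift w)).support ↔ p - Λ.toHom w ∈ (Λ.tile z).support := by
  rw [tile_shift, support_translate, image_add_left, mem_preimage, neg_add_eq_sub]

theorem eventually_inter_nonempty_of_adj :
    ∀ᶠ δ in 𝓝[>] 0, ∀ a b c, Λ.Adj a b → Λ.Adj a c → ∀ p ∈ (Λ.tile b).support,
      ∀ q ∈ (Λ.tile c).support, dist p q ≤ δ →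
        ((Λ.tile b).support ∩ (Λ.tile c).support).Nonempty := by
  have hfin : ∀ᶠ δ in 𝓝[>] 0, ∀ i, ∀ b ∈ Λ.nbhd i, ∀ c ∈ Λ.nbhd i,
      ∀ p ∈ (Λ.tile b).support, ∀ q ∈ (Λ.tile c).support, dist p q ≤ δ →
        ((Λ.tile b).support ∩ (Λ.tile c).support).Nonempty := by
    simp only [eventually_all, eventually_all_finite (Λ.nbhd_finite _)]
    exact fun i b _ c _ =>
      eventually_inter_nonempty_of_dist_le (isCompact_support _) (isCompact_support _).isClosed
  filter_upwards [hfin] with δ h a b c hb hc p hp q hq hpq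
  rw [← b.shift_neg_shift a.2, mem_support_shift_iff] at hp
  rw [← c.shift_neg_shift a.2, mem_support_shift_iff] at hq
  obtain ⟨x, hxb, hxc⟩ := h a.1 _ (Λ.adj_iff.1 hb) _ (Λ.adj_iff.1 hc) _ hp _ hq (by simpa)
  refine ⟨x + Λ.toHom a.2, ?_, ?_⟩
  · rwa [← b.shift_neg_shift a.2, mem_support_shift_iff, add_sub_cancel_right]
  · rwa [← c.shift_neg_shift a.2, mem_support_shift_iff, add_sub_cancel_right]

theorem surrounds_shift {C : Set (Cell k m)} {z : Cell k m}
    (h : Surrounds (Λ.tile '' C) (Λ.tile z)) (w : Posn m) :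
    Surrounds (Λ.tile '' ((Cell.shift · w) '' C)) (Λ.tile (z.shift w)) := by
  have := h.translate (Λ.toHom w)
  rw [translatePatch, image_image] at this
  simpa only [image_image, tile_shift] using this

theorem eventually_exists_mem_of_surrounds :
    ∀ᶠ δ in 𝓝[>] 0, ∀ a, ∀ C ⊆ {b | Λ.Adj a b}, Surrounds (Λ.tile '' C) (Λ.tile a) →
      ∀ p ∈ (Λ.tile a).support, ∀ q, dist q p ≤ δ → ∃ b ∈ C, q ∈ (Λ.tile b).support := by
  have hfin : ∀ᶠ δ in 𝓝[>] 0, ∀ i, ∀ C ∈ 𝒫 (Λ.nbhd i),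
      Surrounds (Λ.tile '' C) (Λ.tile (i, 0)) →
        cthickening δ (Λ.tile (i, 0)).support ⊆ PatchSupport (Λ.tile '' C) := by
    simp only [eventually_all, eventually_all_finite (Λ.nbhd_finite _).powerset]
    exact fun i C _ h => eventually_cthickening_subset (isCompact_support _) h
  filter_upwards [hfin] with δ h a C hC hsurr p hp q hqp
  rw [← a.shift_neg_shift a.2, a.shift_neg_snd, mem_support_shift_iff] at hp
  have hC' : (Cell.shift · (-a.2)) '' C ⊆ Λ.nbhd a.1 := by
    rintro _ ⟨b, hb, rfl⟩
    exact Λ.adj_iff.1 (hC hb)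
  have hq := h a.1 _ hC' (a.shift_neg_snd ▸ Λ.surrounds_shift hsurr (-a.2))
    (mem_cthickening_of_dist_le (q - Λ.toHom a.2) _ _ _ hp (by simpa))
  simp only [PatchSupport, biUnion_image, mem_iUnion₂, mem_support_shift_iff, map_neg,
    sub_neg_eq_add, sub_add_cancel, exists_prop] at hq
  exact hq

end EdgeLattice

theorem Realizes.sameShape_translate {t : ColoredRhombus} {p : SymbTile k} {w : Pt}
    (h : Realizes shapes t p) : (t.shape.translate w).SameShape (shapes p.1) :=
  h.1

namespace EdgeLattice

variable {Λ : EdgeLattice shapes m} {F : ℕ → PatternCode k} {T : List (SymbTile k)}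

theorem realizes_coloredTile (Λ : EdgeLattice shapes m) (a : PlacedTile k m) :
    Realizes shapes (Λ.coloredTile a) a.1 :=
  ⟨Λ.sameShape_tile _, rfl⟩

theorem coloredTile_translate_eq {t : ColoredRhombus} {p : SymbTile k} {b : Posn m} {w : Pt}
    (h : Realizes shapes t p) (hpos : t.shape.pos = Λ.toHom b + w) :
    (Λ.coloredTile (p, b)).translate w = t := by
  obtain ⟨⟨_, u, v⟩, c⟩ := t
  obtain ⟨⟨rfl, rfl⟩, rfl⟩ := h
  rw [ColoredRhombus.mk.injEq]
  exact ⟨by rw [Rhombus.mk.injEq]; exact ⟨hpos.symm, rfl, rfl⟩, rfl⟩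

/-- Local conditions on a set `v` of placed tiles under which the part of `v` using the tileset `T`
contains a coloured tiling avoiding the patterns `F n`. Tiles are only compared when they have a
common neighbour, so `v` itself need not be embedded in the plane. -/
structure IsDescription (Λ : EdgeLattice shapes m) (F : ℕ → PatternCode k) (T : List (SymbTile k))
    (v : Set (PlacedTile k m)) : Prop where
  root : ∃ p ∈ T, (p, 0) ∈ v
  compatible : ∀ a ∈ v, ∀ b ∈ v, ∀ c ∈ v, Λ.Adj a.cell b.cell → Λ.Adj a.cell c.cell →
    (Λ.coloredTile b).Compatible (Λ.coloredTile c)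
  surrounds : ∀ a ∈ v,
    Surrounds (Λ.tiles {b ∈ v | b.1 ∈ T ∧ Λ.Adj a.cell b.cell}) (Λ.tile a.cell)
  forbidden : ∀ n, ¬ Appears (decodePattern shapes (F n)) (Λ.tiles v)

theorem surrounds_tiles_of_isColoredTiling {x : Set ColoredRhombus} (hx : IsColoredTiling x)
    (hT : ∀ t ∈ x, ∃ p ∈ T, Realizes shapes t p) {w : Pt} {a : PlacedTile k m}
    (ha : (Λ.coloredTile a).translate w ∈ x) :
    Surrounds (Λ.tiles {b | b.1 ∈ T ∧ (Λ.coloredTile b).translate w ∈ x ∧ Λ.Adj a.cell b.cell})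
      (Λ.tile a.cell) := by
  have htiling : IsTilingOn (range shapes) (eraseColors x) := by
    refine ⟨hx.1, ?_⟩
    rintro _ ⟨t, ht, rfl⟩
    obtain ⟨p, -, hp⟩ := hT t ht
    exact ⟨_, mem_range_self p.1, hp.1⟩
  have h := (htiling.surrounds (finite_range shapes) (mem_image_of_mem _ ha)).translate (-w)
  have hr : ((Λ.tile a.cell).translate w).translate (-w) = Λ.tile a.cell := by simp
  refine (hr ▸ h).mono ?_
  rintro _ ⟨_, ⟨⟨t, ht, rfl⟩, hadj⟩, rfl⟩
  obtain ⟨p, hp, htp⟩ := hT t ht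
  replace hadj : SharesVertex (Λ.tile a.cell) (t.shape.translate (-w)) :=
    hr ▸ (sharesVertex_translate_iff (-w)).2 hadj
  obtain ⟨b, hb⟩ := Λ.exists_eq_tile_of_sharesVertex (Realizes.sameShape_translate htp) hadj
  refine ⟨_, ⟨(p, b), ⟨hp, ?_, ?_⟩, rfl⟩, hb.symm⟩
  · have hpos : t.shape.pos + -w = Λ.toHom b := congrArg Rhombus.pos hb
    rwa [coloredTile_translate_eq htp (by rw [← hpos, neg_add_cancel_right])]
  · rwa [hb] at hadj

theorem exists_isDescription (Λ : EdgeLattice shapes m) {x : Set ColoredRhombus}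
    (hx : IsColoredTiling x) (hT : ∀ t ∈ x, ∃ p ∈ T, Realizes shapes t p)
    (hF : ∀ n, ¬ Appears (decodePattern shapes (F n)) (eraseColors x)) :
    ∃ v, Λ.IsDescription F T v := by
  obtain ⟨-, hcover, hcompat⟩ := isColoredTiling_iff.1 hx
  obtain ⟨t₀, ht₀, -⟩ := mem_iUnion₂.1 (hcover.symm ▸ mem_univ (0 : Pt))
  obtain ⟨p₀, hp₀, hr₀⟩ := hT t₀ ht₀
  set w := t₀.shape.pos with hw
  let v : Set (PlacedTile k m) := {a | a.1 ∈ T ∧ (Λ.coloredTile a).translate w ∈ x}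
  have hv : translatePatch (Λ.tiles v) w ⊆ eraseColors x := by
    rintro _ ⟨_, ⟨_, ⟨a, ha, rfl⟩, rfl⟩, rfl⟩
    exact ⟨_, ha.2, rfl⟩
  refine ⟨v, ⟨p₀, hp₀, hp₀, ?_⟩, fun a _ b hb c hc _ _ => ?_, fun a ha => ?_, fun n hn => ?_⟩
  · rwa [coloredTile_translate_eq hr₀ (by simp [hw])]
  · exact (ColoredRhombus.compatible_translate_iff w).1 (hcompat _ hb.2 _ hc.2)
  · refine (surrounds_tiles_of_isColoredTiling hx hT ha.2).mono (image_mono (image_mono ?_))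
    exact fun b hb => ⟨⟨hb.1, hb.2.1⟩, hb.1, hb.2.2⟩
  · obtain ⟨w', hw'⟩ := hn
    refine hF n ⟨w' + w, ?_⟩
    refine Subset.trans ?_ ((image_mono hw').trans hv)
    simp [translatePatch, image_image]

namespace IsDescription

variable {v : Set (PlacedTile k m)}

theorem exists_isDevelopable (h : Λ.IsDescription F T v) :
    ∃ δ, IsDevelopable (fun a : {a ∈ v | a.1 ∈ T} => (Λ.tile (PlacedTile.cell a)).support)
      (fun a b => Λ.Adj (PlacedTile.cell a) (PlacedTile.cell b)) δ := by
  obtain ⟨δ, hδ, hinter, hmem⟩ := (eventually_mem_nhdsWithin.and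
    (Λ.eventually_inter_nonempty_of_adj.and (eventually_nhdsGT_zero_mul_left two_pos
      Λ.eventually_exists_mem_of_surrounds))).exists
  refine ⟨δ, hδ, fun _ => .refl _, fun h => h.symm, ?_, ?_⟩
  · intro a b c hab hac p q hp hq hpq
    exact (h.compatible a a.2.1 b b.2.1 c c.2.1 hab hac).sharesVertex
      (hinter _ _ _ hab hac p hp q hq hpq)
  · intro a p hp q hqp
    obtain ⟨_, ⟨b, ⟨hbv, hbT, hab⟩, rfl⟩, hq⟩ := hmem (PlacedTile.cell a)
      (PlacedTile.cell '' {b ∈ v | b.1 ∈ T ∧ Λ.Adj (PlacedTile.cell a) b.cell})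
      (image_subset_iff.2 fun b hb => hb.2.2) (h.surrounds a a.2.1) p hp q hqp
    exact ⟨⟨b, hbv, hbT⟩, hab, hq⟩

theorem exists_isColoredTiling (h : Λ.IsDescription F T v) (hval : ∀ i, (shapes i).IsValid) :
    ∃ Y ⊆ {a ∈ v | a.1 ∈ T}, IsColoredTiling (Λ.coloredTile '' Y) := by
  obtain ⟨p₀, hp₀, hv₀⟩ := h.root
  obtain ⟨δ, hdev⟩ := h.exists_isDevelopable
  obtain ⟨Y, hY, hadj⟩ := hdev.exists_cover (a₀ := ⟨(p₀, 0), hv₀, hp₀⟩)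
    (fun a => (convex_support _).isPreconnected)
    (vertices_subset_support _ (.inl Λ.toHom.map_zero.symm))
  refine ⟨_, Subtype.coe_image_subset _ Y, isColoredTiling_iff.2 ?_⟩
  simp only [forall_mem_image, biUnion_image]
  refine ⟨fun a _ => hval a.1.1.1, hY, fun a ha b hb => ?_⟩
  by_cases hab : ((Λ.coloredTile a).shape.support ∩ (Λ.coloredTile b).shape.support).Nonempty
  · exact h.compatible a a.2.1 a a.2.1 b b.2.1 (.refl _) (hadj a ha b hb hab)
  · exact ColoredRhombus.compatible_of_disjoint (not_nonempty_iff_eq_empty.1 hab)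

end IsDescription

theorem dominoPred_iff_exists_isDescription (Λ : EdgeLattice shapes m)
    (hval : ∀ i, (shapes i).IsValid) :
    DominoPred shapes (SubshiftOfForbidden (range shapes) fun n => decodePattern shapes (F n)) T ↔
      ∃ v, Λ.IsDescription F T v := by
  constructor
  · rintro ⟨x, hx, hT, -, hF⟩
    exact Λ.exists_isDescription hx hT hF
  · rintro ⟨v, hv⟩
    obtain ⟨Y, hY, hx⟩ := hv.exists_isColoredTiling hval
    refine ⟨_, hx, ?_, ⟨hx.1, ?_⟩, fun n hn => hv.forbidden n ?_⟩
    · rintro _ ⟨a, ha, rfl⟩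
      exact ⟨a.1, (hY ha).2, Λ.realizes_coloredTile a⟩
    · rintro _ ⟨_, ⟨a, -, rfl⟩, rfl⟩
      exact ⟨_, mem_range_self a.1.1, Λ.sameShape_tile _⟩
    · obtain ⟨w, hw⟩ := hn
      refine ⟨w, hw.trans ?_⟩
      rintro _ ⟨_, ⟨a, ha, rfl⟩, rfl⟩
      exact ⟨_, ⟨a, (hY ha).1, rfl⟩, rfl⟩

end EdgeLattice

/-! ### Enumeration of the local conditions -/

theorem exists_list_of_forall_exists {α β : Type*} {L : List α} {s : Set β} {R : β → α → Prop}
    (h : ∀ a ∈ L, ∃ b ∈ s, R b a) : ∃ M : List β, (∀ b ∈ M, b ∈ s) ∧ ∀ a ∈ L, ∃ b ∈ M, R b a := by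
  choose f hfs hf using h
  refine ⟨L.pmap f fun _ => id, fun b hb => ?_,
    fun a ha => ⟨f a ha, List.mem_pmap.2 ⟨a, ha, rfl⟩, hf a ha⟩⟩
  obtain ⟨a, ha, rfl⟩ := List.mem_pmap.1 hb
  exact hfs a ha

theorem SymbTile.primrec_colors (i : Fin 4) : Primrec fun p : SymbTile k => p.colors i := by
  fin_cases i
  · exact Primrec.fst.comp Primrec.snd
  · exact Primrec.fst.comp (Primrec.snd.comp Primrec.snd)
  · exact Primrec.fst.comp (Primrec.snd.comp (Primrec.snd.comp Primrec.snd))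
  · exact Primrec.snd.comp (Primrec.snd.comp (Primrec.snd.comp Primrec.snd))

theorem Cell.primrec_shift_neg : Primrec₂ fun (z : Cell k m) w => z.shift (-w) :=
  (Primrec.pair (Primrec.fst.comp Primrec.fst)
    (Posn.primrec_sub.comp (Primrec.snd.comp Primrec.fst) Primrec.snd)).of_eq fun p => by
      simp [Cell.shift, sub_eq_add_neg]

theorem PlacedTile.primrec_cell : Primrec (PlacedTile.cell (k := k) (m := m)) :=
  Primrec.pair (Primrec.fst.comp Primrec.fst) Primrec.snd

namespace EdgeLattice

variable (Λ : EdgeLattice shapes m)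

theorem isClausal_root : IsClausal fun (T : List (SymbTile k)) (v : Set (PlacedTile k m)) =>
    ∃ p ∈ T, (p, 0) ∈ v := by
  have hc : Primrec fun T : List (SymbTile k) =>
      (([], T.map fun p => (p, 0)) : Clause (PlacedTile k m)) :=
    Primrec.pair (Primrec.const [])
      (Primrec.list_map Primrec.id (Primrec.pair Primrec.snd (Primrec.const 0)))
  exact (IsClausal.of_clause hc.to_comp).congr fun T v => by simp [Clause.SatisfiedBy]

theorem primrecPred_adj_and_adj {G : Cell k m → Cell k m → Prop}
    (hG : ∀ b c w, G (b.shift w) (c.shift w) ↔ G b c) :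
    PrimrecPred fun p : PlacedTile k m × PlacedTile k m × PlacedTile k m =>
      Λ.Adj p.1.cell p.2.1.cell ∧ Λ.Adj p.1.cell p.2.2.cell ∧ G p.2.1.cell p.2.2.cell := by
  have hfin : {q : Fin k × Cell k m × Cell k m |
      q.2.1 ∈ Λ.nbhd q.1 ∧ q.2.2 ∈ Λ.nbhd q.1 ∧ G q.2.1 q.2.2}.Finite := by
    refine (finite_iUnion fun i =>
      ((Λ.nbhd_finite i).prod (Λ.nbhd_finite i)).image (Prod.mk i)).subset ?_
    exact fun q hq => mem_iUnion.2 ⟨q.1, q.2, ⟨hq.1, hq.2.1⟩, rfl⟩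
  have hpos : Primrec fun p : PlacedTile k m × PlacedTile k m × PlacedTile k m => p.1.cell.2 :=
    Primrec.snd.comp (PlacedTile.primrec_cell.comp Primrec.fst)
  have hrecenter : Primrec fun p : PlacedTile k m × PlacedTile k m × PlacedTile k m =>
      (p.1.cell.1, p.2.1.cell.shift (-p.1.cell.2), p.2.2.cell.shift (-p.1.cell.2)) :=
    Primrec.pair (Primrec.fst.comp (PlacedTile.primrec_cell.comp Primrec.fst)) <| Primrec.pair
      (Cell.primrec_shift_neg.comp
        (PlacedTile.primrec_cell.comp (Primrec.fst.comp Primrec.snd)) hpos)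
      (Cell.primrec_shift_neg.comp
        (PlacedTile.primrec_cell.comp (Primrec.snd.comp Primrec.snd)) hpos)
  exact ((primrecPred_mem_of_finite hfin).comp hrecenter).of_eq fun p =>
    and_congr Λ.adj_iff.symm (and_congr Λ.adj_iff.symm (hG ..))

theorem isClausal_compatible {α : Type} [Primcodable α] :
    IsClausal fun (_ : α) (v : Set (PlacedTile k m)) => ∀ a ∈ v, ∀ b ∈ v, ∀ c ∈ v,
      Λ.Adj a.cell b.cell → Λ.Adj a.cell c.cell →
        (Λ.coloredTile b).Compatible (Λ.coloredTile c) := by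
  have hinj (b c : Cell k m) (w : Posn m) :
      Λ.tile (b.shift w) = Λ.tile (c.shift w) ↔ Λ.tile b = Λ.tile c := by
    rw [tile_shift, tile_shift, (translate_injective _).eq_iff]
  have hshape := Λ.primrecPred_adj_and_adj
    (G := fun b c => ¬ (Λ.tile b ≠ Λ.tile c → EdgeToEdgePair (Λ.tile b) (Λ.tile c)))
    fun b c w => by rw [ne_eq, hinj, tile_shift, tile_shift, edgeToEdgePair_translate_iff]
  have hedge (q : Fin 4 × Fin 4) := Λ.primrecPred_adj_and_adj
    (G := fun b c => (Λ.tile b).edge q.1 = (Λ.tile c).edge q.2 ∧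
      (Λ.tile b = Λ.tile c → q.1 = q.2))
    fun b c w => by rw [hinj, tile_shift, tile_shift, edge_translate_eq_iff]
  have hcolor (q : Fin 4 × Fin 4) :
      PrimrecPred fun p : PlacedTile k m × PlacedTile k m × PlacedTile k m =>
        p.2.1.1.colors q.1 = p.2.2.1.colors q.2 :=
    Primrec.eq.comp
      ((SymbTile.primrec_colors q.1).comp (Primrec.fst.comp (Primrec.fst.comp Primrec.snd)))
      ((SymbTile.primrec_colors q.2).comp (Primrec.fst.comp (Primrec.snd.comp Primrec.snd)))
  refine ((IsClausal.forall₃_not hshape).and (.ball_of_finite finite_univ fun q _ =>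
    .forall₃_not ((hedge q).and (hcolor q).not))).congr fun _ v => ⟨fun h => ⟨?_, ?_⟩, ?_⟩
  · exact fun a ha b hb c hc ⟨hab, hac, hne2e⟩ => hne2e (h a ha b hb c hc hab hac).1
  · exact fun q _ a ha b hb c hc ⟨⟨hab, hac, hij, hsame⟩, hne⟩ =>
      hne ((h a ha b hb c hc hab hac).2 q.1 q.2 hij hsame)
  · rintro ⟨he2e, hcol⟩ a ha b hb c hc hab hac
    exact ⟨not_not.1 fun hne2e => he2e a ha b hb c hc ⟨hab, hac, hne2e⟩, fun i j hij hsame =>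
      not_not.1 fun hne => hcol (i, j) trivial a ha b hb c hc ⟨⟨hab, hac, hij, hsame⟩, hne⟩⟩

theorem isClausal_exists_shift_mem {D : Set (Cell k m)} (hD : D.Finite) (i : Fin k) :
    IsClausal fun (T : List (SymbTile k)) (v : Set (PlacedTile k m)) =>
      ∀ a ∈ v, a.1.1 = i → ∃ b ∈ v, b.1 ∈ T ∧ b.cell.shift (-a.2) ∈ D := by
  let N (j : Fin k) : List (Posn m) :=
    (hD.preimage (Prod.mk_right_injective j).injOn).toFinset.toList
  have hN (j : Fin k) (w : Posn m) : w ∈ N j ↔ (j, w) ∈ D := by simp [N]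
  have hR : PrimrecPred fun a : PlacedTile k m => a.1.1 = i :=
    Primrec.eq.comp (Primrec.fst.comp Primrec.fst) (Primrec.const i)
  have hc : Primrec₂ fun (T : List (SymbTile k)) (a : PlacedTile k m) =>
      (([a], T.flatMap fun p => (N p.1).map fun w => (p, w + a.2)) : Clause (PlacedTile k m)) := by
    refine Primrec.pair (Primrec.list_cons.comp Primrec.snd (Primrec.const [])) <|
      Primrec.list_flatMap Primrec.fst <| Primrec.list_map
        ((Primrec.dom_finite N).comp (Primrec.fst.comp Primrec.snd)) <|
      Primrec.pair (Primrec.snd.comp Primrec.fst) (Posn.primrec_add.comp Primrec.snd ?_)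
    exact Primrec.snd.comp (Primrec.snd.comp (Primrec.fst.comp Primrec.fst))
  refine (IsClausal.of_imp hR.computablePred hc.to_comp).congr fun T v => ?_
  simp only [Clause.SatisfiedBy, List.mem_singleton, forall_eq, List.mem_flatMap, List.mem_map, hN]
  refine forall_congr' fun a => ?_
  rw [forall_comm]
  refine imp_congr_right fun _ => imp_congr_right fun _ => ⟨?_, ?_⟩
  · rintro ⟨b, hb, hbT, hbD⟩
    exact ⟨b, ⟨b.1, hbT, b.2 - a.2, by rwa [sub_eq_add_neg], by simp⟩, hb⟩
  · rintro ⟨_, ⟨p, hp, w, hw, rfl⟩, hb⟩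
    exact ⟨_, hb, hp, by simpa [Cell.shift, PlacedTile.cell] using hw⟩

theorem surrounds_tiles_iff {B : Set (PlacedTile k m)} {z : Cell k m} :
    Surrounds (Λ.tiles B) (Λ.tile z) ↔
      Surrounds (Λ.tile '' ((fun b => b.cell.shift (-z.2)) '' B)) (Λ.tile (z.1, 0)) := by
  refine ⟨fun h => ?_, fun h => ?_⟩
  · simpa only [image_image, z.shift_neg_snd] using Λ.surrounds_shift h (-z.2)
  · simpa [tiles, image_image, Cell.shift_neg_shift, Cell.shift] using Λ.surrounds_shift h z.2

theorem isClausal_surrounds :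
    IsClausal fun (T : List (SymbTile k)) (v : Set (PlacedTile k m)) => ∀ a ∈ v,
      Surrounds (Λ.tiles {b ∈ v | b.1 ∈ T ∧ Λ.Adj a.cell b.cell}) (Λ.tile a.cell) := by
  have hfin : {q : Fin k × Set (Cell k m) | q.2 ⊆ Λ.nbhd q.1 ∧
      ¬ Surrounds (Λ.tile '' q.2) (Λ.tile (q.1, 0))}.Finite := by
    refine (finite_iUnion fun i => (Λ.nbhd_finite i).powerset.image (Prod.mk i)).subset ?_
    exact fun q hq => mem_iUnion.2 ⟨q.1, q.2, hq.1, rfl⟩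
  refine (IsClausal.ball_of_finite hfin fun q _ => isClausal_exists_shift_mem
    ((Λ.nbhd_finite q.1).sdiff (t := q.2)) q.1).congr fun T v => ⟨fun h q hq a ha hi => ?_,
      fun h a ha => ?_⟩
  · obtain ⟨i, C⟩ := q
    obtain rfl : a.1.1 = i := hi
    by_contra! hC
    refine hq.2 (((Λ.surrounds_tiles_iff).1 (h a ha)).mono (image_mono ?_))
    rintro _ ⟨b, ⟨hb, hbT, hab⟩, rfl⟩
    by_contra hbC
    exact hC b hb hbT ⟨(Λ.adj_iff (a := a.cell)).1 hab, hbC⟩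
  · rw [surrounds_tiles_iff]
    set C := (fun b : PlacedTile k m => b.cell.shift (-a.cell.2)) ''
      {b ∈ v | b.1 ∈ T ∧ Λ.Adj a.cell b.cell}
    have hsub : C ⊆ Λ.nbhd a.1.1 := by
      rintro _ ⟨b, hb, rfl⟩
      exact (Λ.adj_iff (a := a.cell)).1 hb.2.2
    by_contra hsurr
    obtain ⟨b, hb, hbT, hab, hbC⟩ := h (a.1.1, C) ⟨hsub, hsurr⟩ a ha rfl
    exact hbC ⟨b, ⟨hb, hbT, (Λ.adj_iff (a := a.cell)).2 hab⟩, rfl⟩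

/-- The element of `ℤ^m` corresponding to a displacement code. -/
def disp (d : Disp k) : Posn m := (d.map fun e => e.2.1 • Λ.u e.1 + e.2.2 • Λ.v e.1).sum

/-- The cell of an entry of a pattern code, translated by `w`. -/
def entryCell (e : Fin k × Disp k) (w : Posn m) : Cell k m := (e.1, Λ.pos e.1 + Λ.disp e.2 + w)

theorem toHom_disp (d : Disp k) : Λ.toHom (Λ.disp d) = dispVec shapes d := by
  simp only [disp, dispVec, map_list_sum, List.map_map]
  congr 2
  ext1 e
  simp only [Function.comp_apply, map_add, map_zsmul, Λ.map_u, Λ.map_v, Int.cast_smul_eq_zsmul]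

theorem primrec_disp : Primrec Λ.disp := by
  have hterm : Primrec₂ fun (_ : Disp k) (p : (Fin k × ℤ × ℤ) × Posn m) =>
      p.1.2.1 • Λ.u p.1.1 + p.1.2.2 • Λ.v p.1.1 + p.2 := by
    have he : Primrec fun q : Disp k × (Fin k × ℤ × ℤ) × Posn m => q.2.1 :=
      Primrec.fst.comp Primrec.snd
    refine Posn.primrec_add.comp (Posn.primrec_add.comp
      (Posn.primrec_zsmul.comp ?_ ((Primrec.dom_finite Λ.u).comp (Primrec.fst.comp he)))
      (Posn.primrec_zsmul.comp ?_ ((Primrec.dom_finite Λ.v).comp (Primrec.fst.comp he))))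
      (Primrec.snd.comp Primrec.snd)
    · exact Primrec.fst.comp (Primrec.snd.comp he)
    · exact Primrec.snd.comp (Primrec.snd.comp he)
  refine (Primrec.list_foldr Primrec.id (Primrec.const 0) hterm).of_eq fun d => ?_
  simp [disp, List.sum, List.foldr_map]

theorem tile_entryCell (e : Fin k × Disp k) (w : Posn m) :
    Λ.tile (Λ.entryCell e w) =
      ((shapes e.1).translate (dispVec shapes e.2)).translate (Λ.toHom w) := by
  simp [tile, entryCell, Rhombus.translate, Λ.map_pos, toHom_disp]

theorem appears_decodePattern_iff {c : PatternCode k} {v : Set (PlacedTile k m)} :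
    Appears (decodePattern shapes c) (Λ.tiles v) ↔
      ∃ w, ∀ e ∈ c, ∃ a ∈ v, Λ.tile a.cell = Λ.tile (Λ.entryCell e w) := by
  simp only [Appears, translatePatch, tiles, image_subset_iff, tile_entryCell]
  constructor
  · rintro ⟨w, hw⟩
    rcases c with _ | ⟨e₀, c⟩
    · simp
    obtain ⟨_, ⟨a₀, -, rfl⟩, h₀⟩ := hw ⟨e₀, List.mem_cons_self, rfl⟩
    have hw₀ : Λ.toHom (a₀.cell.2 - (Λ.pos e₀.1 + Λ.disp e₀.2)) = w := by
      rw [map_sub, map_add, Λ.map_pos, toHom_disp, sub_eq_iff_eq_add']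
      exact congrArg Rhombus.pos h₀
    refine ⟨a₀.cell.2 - (Λ.pos e₀.1 + Λ.disp e₀.2), fun e he => ?_⟩
    obtain ⟨_, ⟨a, ha, rfl⟩, h⟩ := hw ⟨e, he, rfl⟩
    exact ⟨a, ha, hw₀ ▸ h⟩
  · rintro ⟨w, hw⟩
    refine ⟨Λ.toHom w, ?_⟩
    rintro _ ⟨e, he, rfl⟩
    obtain ⟨a, ha, h⟩ := hw e he
    exact ⟨a.cell, ⟨a, ha, rfl⟩, h⟩

theorem primrecRel_tile_eq_entryCell :
    PrimrecRel fun (a : PlacedTile k m) (q : (Fin k × Disp k) × Posn m) =>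
      Λ.tile a.cell = Λ.tile (Λ.entryCell q.1 q.2) := by
  have hshape : PrimrecPred fun p : PlacedTile k m × (Fin k × Disp k) × Posn m =>
      (p.1.1.1, p.2.1.1) ∈ {q : Fin k × Fin k | (shapes q.1).SameShape (shapes q.2)} :=
    (primrecPred_mem_of_finite (toFinite _)).comp (Primrec.pair
      (Primrec.fst.comp (Primrec.fst.comp Primrec.fst))
      (Primrec.fst.comp (Primrec.fst.comp Primrec.snd)))
  have hpos : PrimrecPred fun p : PlacedTile k m × (Fin k × Disp k) × Posn m =>
      p.1.2 = Λ.pos p.2.1.1 + Λ.disp p.2.1.2 + p.2.2 :=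
    Primrec.eq.comp (Primrec.snd.comp Primrec.fst) <| Posn.primrec_add.comp
      (Posn.primrec_add.comp
        ((Primrec.dom_finite Λ.pos).comp (Primrec.fst.comp (Primrec.fst.comp Primrec.snd)))
        (Λ.primrec_disp.comp (Primrec.snd.comp (Primrec.fst.comp Primrec.snd))))
      (Primrec.snd.comp Primrec.snd)
  refine (hpos.and hshape).of_eq fun p => ?_
  dsimp only [tile]
  rw [Rhombus.mk.injEq, Λ.injective.eq_iff]
  rfl

theorem isClausal_forbidden {F : ℕ → PatternCode k} (hF : Computable F) {α : Type}
    [Primcodable α] :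
    IsClausal fun (_ : α) (v : Set (PlacedTile k m)) =>
      ∀ n, ¬ Appears (decodePattern shapes (F n)) (Λ.tiles v) := by
  have hmatch : PrimrecRel fun (c : PatternCode k) (q : Posn m × List (PlacedTile k m)) =>
      ∀ e ∈ c, ∃ a ∈ q.2, Λ.tile a.cell = Λ.tile (Λ.entryCell e q.1) :=
    PrimrecRel.forall_mem_list (R := fun e (q : Posn m × List (PlacedTile k m)) => ∃ a ∈ q.2, _)
      (Λ.primrecRel_tile_eq_entryCell.exists_mem_list.comp (Primrec.snd.comp Primrec.snd)
        (Primrec.pair Primrec.fst (Primrec.fst.comp Primrec.snd)))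
  have hR := ComputablePred.computable_of_manyOneReducible
    (ManyOneReducible.mk _ (Computable.pair (hF.comp Computable.fst) Computable.snd))
    hmatch.computablePred
  have hc : Primrec₂ fun (_ : α) (j : ℕ × Posn m × List (PlacedTile k m)) =>
      ((j.2.2, []) : Clause (PlacedTile k m)) :=
    Primrec.pair (Primrec.snd.comp (Primrec.snd.comp Primrec.snd)) (Primrec.const [])
  refine (IsClausal.of_imp hR hc.to_comp).congr fun _ v => ?_
  simp only [appears_decodePattern_iff]
  refine ⟨fun h j hj hv => (h j.1 ⟨j.2.1, fun e he => ?_⟩).elim, fun h n ⟨w, hw⟩ => ?_⟩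
  · obtain ⟨a, ha, hae⟩ := hj e he
    exact ⟨a, hv a ha, hae⟩
  · obtain ⟨L, hLv, hL⟩ := exists_list_of_forall_exists hw
    simpa using h (n, w, L) hL hLv

theorem isClausal_isDescription {F : ℕ → PatternCode k} (hF : Computable F) :
    IsClausal fun T v => Λ.IsDescription F T v :=
  (isClausal_root.and (Λ.isClausal_compatible.and
    (Λ.isClausal_surrounds.and (Λ.isClausal_forbidden hF)))).congr fun _ _ =>
      ⟨fun h => ⟨h.root, h.compatible, h.surrounds, h.forbidden⟩,
        fun ⟨hr, hc, hs, hf⟩ => ⟨hr, hc, hs, hf⟩⟩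

end EdgeLattice

/-- For any subshift `X` of edge-to-edge rhombus tilings given by
a computable enumeration of forbidden patterns, the problem `Domino(X)` is
co-computably enumerable (`Π⁰₁`). -/
theorem statement_2 (k : ℕ) (shapes : Fin k → Rhombus)
    (hval : ∀ i, (shapes i).IsValid)
    (F : ℕ → PatternCode k) (hF : Computable F) :
    Pi01 (DominoPred shapes
      (SubshiftOfForbidden (Set.range shapes) (fun n => decodePattern shapes (F n)))) := by
  obtain ⟨m, ⟨Λ⟩⟩ := exists_edgeLattice shapes
  exact (Λ.isClausal_isDescription hF).pi01 fun _ => Λ.dominoPred_iff_exists_isDescription hval
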